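/- arXiv:2006.03754 — 2 statements merged into one kernel-verified Lean document; each statement's English description precedes it below -/
import Mathlib

section
/- Let n ≥ 3 be an integer. There exists a finite constant C > 0, depending only on n, such that for all measurable sets I₁,…,I_{n−1} ⊆ ℝ of finite Lebesgue measure and every nonnegative measurable function fₙ on ℝ, ‖T(χ_{I₁},…,χ_{I_{n−1}}, fₙ)‖_1 ≤ C (∏_{j=1}^{n−1} |I_j|^{(n−1)/n}) ‖fₙ‖_1; that is, T is of restricted type at the point P = ((n−1)/n,…,(n−1)/n, 1; 1). -/
/-!
Substituting `x ↦ x + σₙ` and using Fubini, it suffices to bound the probability that the gaps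
`uⱼ = σₙ - σⱼ`, `j < n`, of a random point `σ` of the sphere lie in a box `∏ Eⱼ`. The vector `u` has
density `c (1 - Q(u))^(-1/2)` on an ellipsoid `Q < 1` in dimension `N = n - 1`. On each line in a
coordinate direction this density is `≲ (r² - (t - b)²)^(-1/2)`, whose full integral is bounded;
if moreover `r ≳ 1`, it lies in weak `L²`, so that its integral over `Eₖ` is `≲ |Eₖ|^(1/2)`. Hence
the probability is `≲ ∏_{j ≠ k} |Eⱼ|` for every `k`, and the additional factor `|Eₖ|^(1/2)` is
available on the set of points whose line in direction `k` has `r ≳ 1`. These `N` sets cover the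
ellipsoid: writing `Q_k` for the minimum of `Q` along the line in direction `k`, the average of the
`Q_k` is at most `(1 - 1/N²) Q`. On each of them the geometric mean of the bounds, with the improved
one for `k` counted twice and the others once, is `(∏ |Eⱼ|)^(N/(N+1))`.
-/

open MeasureTheory ENNReal

/-- The `L^p` "norm" (with respect to Lebesgue measure on `ℝ`) of an
`ℝ≥0∞`-valued function, with the convention for `p = ∞`. -/
noncomputable def lpNorm (p : ℝ≥0∞) (g : ℝ → ℝ≥0∞) : ℝ≥0∞ :=
  if p = ∞ then essSup g (volume : Measure ℝ)
  else (∫⁻ x, g x ^ p.toReal) ^ (1 / p.toReal)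

/-- The normalized (total mass 1) surface measure on the unit sphere
`S^{n-1} ⊂ ℝ^n`, viewed as a measure on `ℝ^n` supported on the sphere. -/
noncomputable def normSphere (n : ℕ) : Measure (EuclideanSpace ℝ (Fin n)) :=
  (Measure.map Subtype.val
      ((volume : Measure (EuclideanSpace ℝ (Fin n))).toSphere) Set.univ)⁻¹ •
    Measure.map Subtype.val ((volume : Measure (EuclideanSpace ℝ (Fin n))).toSphere)

/-- The multilinear spherical average
`T(f₁,…,fₙ)(x) = ∫_{S^{n-1}} ∏_{j=1}^n f_j(x - σ_j) dσ(σ)`. -/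
noncomputable def sphAvg (n : ℕ) (f : Fin n → ℝ → ℝ) (x : ℝ) : ℝ≥0∞ :=
  ∫⁻ σ, ∏ j, ENNReal.ofReal (f j (x - σ j)) ∂(normSphere n)

section

open Set Function
open scoped Finset Pointwise NNReal

/-! ### Inverse square roots on sets of finite measure -/

theorem lintegral_Ioo_inv_sqrt {l : ℝ} (hl : 0 ≤ l) :
    ∫⁻ t in Ioo 0 l, ENNReal.ofReal (√t)⁻¹ = ENNReal.ofReal (2 * √l) := by
  have hrpow : ∀ t ∈ Ioc 0 l, t ^ (-(1 / 2) : ℝ) = (√t)⁻¹ := fun t ht => by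
    rw [Real.rpow_neg ht.1.le, Real.sqrt_eq_rpow]
  have hint : IntegrableOn (fun t : ℝ => (√t)⁻¹) (Ioc 0 l) :=
    (((intervalIntegral.intervalIntegrable_rpow' (by norm_num)).1).congr_fun hrpow
      measurableSet_Ioc)
  rw [setLIntegral_congr Ioo_ae_eq_Ioc, ← ofReal_integral_eq_lintegral_ofReal hint
    (.of_forall fun t => by positivity), ← setIntegral_congr_fun measurableSet_Ioc hrpow,
    ← intervalIntegral.integral_of_le hl, integral_rpow (by norm_num), Real.sqrt_eq_rpow]
  congr 1
  norm_num
  ring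

-- In Lean `(√t)⁻¹ = 0` for `t ≤ 0`, so that integrands of this kind vanish where the radicand is
-- not positive.
theorem ofReal_inv_sqrt_le_indicator_Ioo_add {l : ℝ} (hl : 0 < l) (t : ℝ) :
    ENNReal.ofReal (√t)⁻¹ ≤
      (Ioo 0 l).indicator (fun t => ENNReal.ofReal (√t)⁻¹) t + ENNReal.ofReal (√l)⁻¹ := by
  rcases le_or_gt t 0 with ht0 | ht0
  · simp [Real.sqrt_eq_zero_of_nonpos ht0]
  rcases lt_or_ge t l with htl | htl
  · rw [indicator_of_mem (mem_Ioo.2 ⟨ht0, htl⟩)]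
    exact le_self_add
  · refine le_add_left (ENNReal.ofReal_le_ofReal ?_)
    gcongr

section WeakType

variable {α : Type*} [MeasurableSpace α] {μ : Measure α} {φ : α → ℝ}

theorem setLIntegral_inv_sqrt_comp_le (hφ : MeasurePreserving φ μ) (s : Set α) :
    ∫⁻ x in s, ENNReal.ofReal (√(φ x))⁻¹ ∂μ ≤ 3 * μ s ^ (1 / 2 : ℝ) := by
  rcases eq_or_ne (μ s) 0 with h0 | h0
  · simp [setLIntegral_measure_zero _ _ h0]
  rcases eq_or_ne (μ s) ∞ with htop | htop
  · simp [htop]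
  obtain ⟨l, hl, hs⟩ : ∃ l : ℝ, 0 < l ∧ μ s = ENNReal.ofReal l :=
    ⟨_, ENNReal.toReal_pos h0 htop, (ENNReal.ofReal_toReal htop).symm⟩
  set g : ℝ → ℝ≥0∞ := fun t => ENNReal.ofReal (√t)⁻¹
  have hgm : Measurable ((Ioo 0 l).indicator g) :=
    (by fun_prop : Measurable g).indicator measurableSet_Ioo
  calc ∫⁻ x in s, g (φ x) ∂μ
      ≤ ∫⁻ x in s, ((Ioo 0 l).indicator g (φ x) + ENNReal.ofReal (√l)⁻¹) ∂μ :=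
        lintegral_mono fun x => ofReal_inv_sqrt_le_indicator_Ioo_add hl (φ x)
    _ = ∫⁻ x in s, (Ioo 0 l).indicator g (φ x) ∂μ + ENNReal.ofReal (√l)⁻¹ * μ s := by
        rw [lintegral_add_right _ measurable_const, setLIntegral_const]
    _ ≤ ENNReal.ofReal (2 * √l) + ENNReal.ofReal (√l)⁻¹ * μ s := by
        gcongr
        calc ∫⁻ x in s, (Ioo 0 l).indicator g (φ x) ∂μ
            ≤ ∫⁻ x, (Ioo 0 l).indicator g (φ x) ∂μ := setLIntegral_le_lintegral _ _
          _ = ENNReal.ofReal (2 * √l) := by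
            rw [hφ.lintegral_comp hgm, lintegral_indicator measurableSet_Ioo,
              lintegral_Ioo_inv_sqrt hl.le]
    _ = 3 * μ s ^ (1 / 2 : ℝ) := by
        rw [hs, ENNReal.ofReal_rpow_of_pos hl, ← Real.sqrt_eq_rpow,
          ← ENNReal.ofReal_mul (by positivity), ← ENNReal.ofReal_add (by positivity)
            (by positivity), inv_mul_eq_div, Real.div_sqrt,
          show 2 * √l + √l = 3 * √l by ring, ENNReal.ofReal_mul (by norm_num)]
        simp

theorem inv_sqrt_sq_sub_sq_le {r : ℝ} (hr : 0 ≤ r) (t : ℝ) :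
    (√(r ^ 2 - t ^ 2))⁻¹ ≤ (√r)⁻¹ * ((√(t + r))⁻¹ + (√(r - t))⁻¹) := by
  rcases le_or_gt (r ^ 2 - t ^ 2) 0 with h | h
  · rw [Real.sqrt_eq_zero_of_nonpos h, _root_.inv_zero]
    positivity
  obtain ⟨htl, htr⟩ := abs_lt.1 (abs_lt_of_sq_lt_sq (sub_pos.1 h) hr)
  have hr0 : 0 < r := by linarith
  have hfactor : ∀ x, 0 < x → r * x ≤ r ^ 2 - t ^ 2 →
      (√(r ^ 2 - t ^ 2))⁻¹ ≤ (√r)⁻¹ * (√x)⁻¹ := by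
    intro x hx hle
    rw [← mul_inv, ← Real.sqrt_mul hr]
    gcongr
  rw [mul_add]
  rcases le_total t 0 with ht | ht
  · exact (hfactor (t + r) (by linarith) (by nlinarith)).trans
      (le_add_of_nonneg_right (by positivity))
  · exact (hfactor (r - t) (by linarith) (by nlinarith)).trans
      (le_add_of_nonneg_left (by positivity))

theorem setLIntegral_inv_sqrt_sq_sub_sq_le (hφ : MeasurePreserving φ μ) {r : ℝ} (hr : 0 ≤ r)
    (s : Set α) :
    ∫⁻ x in s, ENNReal.ofReal (√(r ^ 2 - φ x ^ 2))⁻¹ ∂μ ≤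
      6 * ENNReal.ofReal (√r)⁻¹ * μ s ^ (1 / 2 : ℝ) := by
  have hφm : Measurable φ := hφ.measurable
  have hadd : MeasurePreserving (fun x => φ x + r) μ :=
    (measurePreserving_add_right volume r).comp hφ
  have hsub : MeasurePreserving (fun x => r - φ x) μ :=
    (Measure.measurePreserving_sub_left volume r).comp hφ
  calc ∫⁻ x in s, ENNReal.ofReal (√(r ^ 2 - φ x ^ 2))⁻¹ ∂μ
      ≤ ∫⁻ x in s, ENNReal.ofReal (√r)⁻¹ *
          (ENNReal.ofReal (√(φ x + r))⁻¹ + ENNReal.ofReal (√(r - φ x))⁻¹) ∂μ := by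
        refine lintegral_mono fun x => ?_
        rw [← ENNReal.ofReal_add (by positivity) (by positivity),
          ← ENNReal.ofReal_mul (by positivity)]
        exact ENNReal.ofReal_le_ofReal (inv_sqrt_sq_sub_sq_le hr (φ x))
    _ = ENNReal.ofReal (√r)⁻¹ * (∫⁻ x in s, ENNReal.ofReal (√(φ x + r))⁻¹ ∂μ +
          ∫⁻ x in s, ENNReal.ofReal (√(r - φ x))⁻¹ ∂μ) := by
        rw [lintegral_const_mul _ (by fun_prop), lintegral_add_left (by fun_prop)]
    _ ≤ ENNReal.ofReal (√r)⁻¹ * (3 * μ s ^ (1 / 2 : ℝ) + 3 * μ s ^ (1 / 2 : ℝ)) := by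
        gcongr
        · exact setLIntegral_inv_sqrt_comp_le hadd s
        · exact setLIntegral_inv_sqrt_comp_le hsub s
    _ = 6 * ENNReal.ofReal (√r)⁻¹ * μ s ^ (1 / 2 : ℝ) := by ring

theorem lintegral_inv_sqrt_sq_sub_sq_le (hφ : MeasurePreserving φ μ) {r : ℝ} (hr : 0 ≤ r) :
    ∫⁻ x, ENNReal.ofReal (√(r ^ 2 - φ x ^ 2))⁻¹ ∂μ ≤ 9 := by
  have hsupp : support (fun x => ENNReal.ofReal (√(r ^ 2 - φ x ^ 2))⁻¹) ⊆ φ ⁻¹' Ioo (-r) r := by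
    intro x hx
    have hpos : 0 < r ^ 2 - φ x ^ 2 := by simpa using hx
    exact abs_lt.1 (abs_lt_of_sq_lt_sq (sub_pos.1 hpos) hr)
  have hvol : μ (φ ⁻¹' Ioo (-r) r) = ENNReal.ofReal (2 * r) := by
    rw [hφ.measure_preimage measurableSet_Ioo.nullMeasurableSet, Real.volume_Ioo]
    ring_nf
  have hconst : (√r)⁻¹ * √(2 * r) ≤ 3 / 2 := by
    rw [Real.sqrt_mul zero_le_two, mul_left_comm]
    calc √2 * ((√r)⁻¹ * √r) ≤ √2 * 1 := by gcongr; exact inv_mul_le_one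
      _ ≤ 3 / 2 := by
        rw [mul_one]
        exact Real.sqrt_le_iff.2 (by norm_num)
  rw [← setLIntegral_eq_of_support_subset hsupp]
  calc ∫⁻ x in φ ⁻¹' Ioo (-r) r, ENNReal.ofReal (√(r ^ 2 - φ x ^ 2))⁻¹ ∂μ
      ≤ 6 * ENNReal.ofReal (√r)⁻¹ * ENNReal.ofReal (2 * r) ^ (1 / 2 : ℝ) :=
        hvol ▸ setLIntegral_inv_sqrt_sq_sub_sq_le hφ hr _
    _ = 6 * ENNReal.ofReal ((√r)⁻¹ * √(2 * r)) := by
        rw [ENNReal.ofReal_rpow_of_nonneg (by positivity) (by norm_num), ← Real.sqrt_eq_rpow,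
          mul_assoc, ← ENNReal.ofReal_mul (by positivity)]
    _ ≤ 6 * ENNReal.ofReal (3 / 2) := by gcongr
    _ = 9 := by
        rw [show (6 : ℝ≥0∞) = ENNReal.ofReal 6 by simp, ← ENNReal.ofReal_mul (by norm_num)]
        norm_num

end WeakType

/-! ### Slicing integrals over boxes -/

theorem setLIntegral_pi_le_mul_prod_erase {ι : Type*} [Fintype ι] [DecidableEq ι] {α : ι → Type*}
    [∀ i, MeasurableSpace (α i)] {μ : ∀ i, Measure (α i)} [∀ i, SigmaFinite (μ i)]
    {f : (∀ i, α i) → ℝ≥0∞} (hf : Measurable f) {s : ∀ i, Set (α i)} (k : ι) {M : ℝ≥0∞}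
    (hM : ∀ x, ∫⁻ t in s k, f (update x k t) ∂μ k ≤ M) :
    ∫⁻ x in univ.pi s, f x ∂Measure.pi μ ≤ M * ∏ j ∈ Finset.univ.erase k, μ j (s j) := by
  rcases isEmpty_or_nonempty (∀ i, α i) with _ | ⟨⟨x⟩⟩
  · simp [lintegral_of_isEmpty]
  rw [Measure.restrict_pi_pi, lintegral_eq_lmarginal_univ x,
    lmarginal_erase' _ hf (Finset.mem_univ k)]
  calc (∫⋯∫⁻_Finset.univ.erase k, (fun x => ∫⁻ t in s k, f (update x k t) ∂μ k)
        ∂fun i => (μ i).restrict (s i)) x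
      ≤ (∫⋯∫⁻_Finset.univ.erase k, (fun _ => M) ∂fun i => (μ i).restrict (s i)) x :=
        lmarginal_mono hM x
    _ = M * ∏ j ∈ Finset.univ.erase k, μ j (s j) := by
        simpa [lmarginal, Measure.pi_univ] using
          congrArg (M * ·) (Finset.prod_attach _ fun j => μ j (s j))

theorem prod_mul_prod_prod_erase {ι M : Type*} [Fintype ι] [DecidableEq ι] [CommMonoid M]
    (e : ι → M) :
    (∏ j, e j) * ∏ m, ∏ j ∈ Finset.univ.erase m, e j = (∏ j, e j) ^ Fintype.card ι := by
  rw [← Finset.prod_mul_distrib]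
  simp [Finset.mul_prod_erase]

theorem le_mul_rpow_div_of_pow_le {x c y : ℝ≥0∞} {m k : ℕ} (hm : m ≠ 0)
    (h : x ^ m ≤ c ^ m * y ^ k) : x ≤ c * y ^ ((k : ℝ) / m) := by
  rw [← ENNReal.pow_le_pow_left_iff hm, mul_pow, ← ENNReal.rpow_mul_natCast,
    div_mul_cancel₀ _ (Nat.cast_ne_zero.2 hm), ENNReal.rpow_natCast]
  exact h

theorem le_mul_prod_rpow_of_forall_le_prod_erase {ι : Type*} [Fintype ι] [DecidableEq ι]
    {e : ι → ℝ≥0∞} {C x : ℝ≥0∞} (k : ι)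
    (hk : x ≤ C * e k ^ (1 / 2 : ℝ) * ∏ j ∈ Finset.univ.erase k, e j)
    (h : ∀ m, x ≤ C * ∏ j ∈ Finset.univ.erase m, e j) :
    x ≤ C * ∏ j, e j ^ ((Fintype.card ι : ℝ) / (Fintype.card ι + 1)) := by
  set P : ι → ℝ≥0∞ := fun m => ∏ j ∈ Finset.univ.erase m, e j
  have hsqrt : (e k ^ (1 / 2 : ℝ)) ^ 2 = e k := by
    rw [← ENNReal.rpow_mul_natCast]
    norm_num
  have hsq : x ^ 2 ≤ C * (∏ j, e j) * (C * P k) := by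
    calc x ^ 2 ≤ (C * e k ^ (1 / 2 : ℝ) * P k) ^ 2 := by gcongr
      _ = C * ((e k ^ (1 / 2 : ℝ)) ^ 2 * P k) * (C * P k) := by ring
      _ = C * (∏ j, e j) * (C * P k) := by
        rw [hsqrt, Finset.mul_prod_erase _ _ (Finset.mem_univ k)]
  have hpow : x ^ (Fintype.card ι + 1) ≤
      C ^ (Fintype.card ι + 1) * (∏ j, e j) ^ Fintype.card ι := by
    calc x ^ (Fintype.card ι + 1) = x * ∏ _m : ι, x := by simp [pow_succ']
      _ = x ^ 2 * ∏ _m ∈ Finset.univ.erase k, x := by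
        rw [← Finset.mul_prod_erase _ _ (Finset.mem_univ k), ← mul_assoc, sq]
      _ ≤ C * (∏ j, e j) * (C * P k) * ∏ m ∈ Finset.univ.erase k, C * P m := by
        gcongr
        exact h _
      _ = C * (∏ j, e j) * ∏ m, C * P m := by
        rw [mul_assoc, Finset.mul_prod_erase _ (fun m => C * P m) (Finset.mem_univ k)]
      _ = C ^ (Fintype.card ι + 1) * (∏ j, e j) ^ Fintype.card ι := by
        rw [Finset.prod_mul_distrib, ← prod_mul_prod_prod_erase]
        simp
        ring
  rw [ENNReal.prod_rpow_of_nonneg (by positivity)]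
  exact_mod_cast le_mul_rpow_div_of_pow_le (Nat.succ_ne_zero _) hpow

/-! ### The density of the coordinate differences -/

section GapForm

variable {ι : Type*}

/-- The quadratic form `∑ uⱼ² - (∑ uⱼ)² / (#s + 1)` in the variables indexed by `s`: the squared
distance to the diagonal line of the point of `ℝ^(#s + 1)` with coordinates `0` and `uⱼ`, `j ∈ s`.
Keeping the index set `s` explicit makes freezing a coordinate the passage from `s` to
`s.erase k`. -/
noncomputable def gapForm (s : Finset ι) (u : ι → ℝ) : ℝ :=
  ∑ j ∈ s, u j ^ 2 - (∑ j ∈ s, u j) ^ 2 / (#s + 1)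

@[fun_prop]
theorem measurable_gapForm (s : Finset ι) : Measurable (gapForm s) := by
  unfold gapForm
  fun_prop

theorem gapForm_smul (s : Finset ι) (r : ℝ) (u : ι → ℝ) :
    gapForm s (r • u) = r ^ 2 * gapForm s u := by
  simp only [gapForm, Pi.smul_apply, smul_eq_mul, mul_pow, ← Finset.mul_sum]
  ring

theorem sq_sum_le_card_mul_gapForm (s : Finset ι) (u : ι → ℝ) :
    (∑ j ∈ s, u j) ^ 2 ≤ #s * (#s + 1) * gapForm s u := by
  have hcs : (∑ j ∈ s, u j) ^ 2 ≤ #s * ∑ j ∈ s, u j ^ 2 := sq_sum_le_card_mul_sum_sq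
  have : #s * (#s + 1) * gapForm s u =
      (#s + 1) * (#s * ∑ j ∈ s, u j ^ 2) - #s * (∑ j ∈ s, u j) ^ 2 := by
    rw [gapForm]
    field_simp
  nlinarith

theorem gapForm_nonneg (s : Finset ι) (u : ι → ℝ) : 0 ≤ gapForm s u := by
  rcases s.eq_empty_or_nonempty with rfl | hs
  · simp [gapForm]
  · have : 0 < (#s : ℝ) * (#s + 1) := by have := hs.card_pos; positivity
    exact nonneg_of_mul_nonneg_right
      ((sq_nonneg _).trans (sq_sum_le_card_mul_gapForm s u)) this

theorem card_add_one_mul_sq_add_gapForm (s : Finset ι) (u : ι → ℝ) (x : ℝ) :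
    (#s + 1) * (x - (∑ j ∈ s, u j) / (#s + 1)) ^ 2 + gapForm s u =
      x ^ 2 + ∑ j ∈ s, (x - u j) ^ 2 := by
  simp only [gapForm, sub_sq, Finset.sum_add_distrib, Finset.sum_sub_distrib, ← Finset.mul_sum,
    Finset.sum_const, nsmul_eq_mul]
  field_simp
  ring

variable [DecidableEq ι]

theorem gapForm_eq_add_gapForm_erase {s : Finset ι} {k : ι} (hk : k ∈ s) (u : ι → ℝ) :
    gapForm s u =
      #s / (#s + 1) * (u k - (∑ j ∈ s.erase k, u j) / #s) ^ 2 + gapForm (s.erase k) u := by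
  have hs : (#s : ℝ) ≠ 0 := Nat.cast_ne_zero.2 (Finset.card_ne_zero_of_mem hk)
  rw [gapForm, gapForm, ← Finset.add_sum_erase s _ hk, ← Finset.add_sum_erase s u hk,
    Finset.cast_card_erase_of_mem hk, sub_add_cancel]
  field_simp
  ring

theorem gapForm_erase_update (s : Finset ι) (k : ι) (u : ι → ℝ) (t : ℝ) :
    gapForm (s.erase k) (update u k t) = gapForm (s.erase k) u := by
  rw [gapForm, gapForm, Finset.sum_congr rfl fun j hj => by
    rw [update_of_ne (Finset.ne_of_mem_erase hj)], Finset.sum_update_of_notMem (by simp)]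

theorem gapForm_update {s : Finset ι} {k : ι} (hk : k ∈ s) (u : ι → ℝ) (t : ℝ) :
    gapForm s (update u k t) =
      #s / (#s + 1) * (t - (∑ j ∈ s.erase k, u j) / #s) ^ 2 + gapForm (s.erase k) u := by
  rw [gapForm_eq_add_gapForm_erase hk, gapForm_erase_update, update_self,
    Finset.sum_update_of_notMem (by simp)]

theorem sum_gapForm_erase_le {s : Finset ι} (hs : s.Nonempty) (u : ι → ℝ) :
    ∑ k ∈ s, gapForm (s.erase k) u ≤ (#s - 1 / #s) * gapForm s u := by
  have hN : (#s : ℝ) ≠ 0 := Nat.cast_ne_zero.2 hs.card_pos.ne'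
  have herase : ∀ k ∈ s, gapForm (s.erase k) u =
      gapForm s u - (#s + 1) / #s * (u k - (∑ j ∈ s, u j) / (#s + 1)) ^ 2 := by
    intro k hk
    rw [gapForm_eq_add_gapForm_erase hk, ← Finset.add_sum_erase s u hk]
    field_simp
    ring
  have hvar : ∑ k ∈ s, (u k - (∑ j ∈ s, u j) / (#s + 1)) ^ 2 =
      gapForm s u - (∑ j ∈ s, u j) ^ 2 / (#s + 1) ^ 2 := by
    simp only [gapForm, sub_sq, Finset.sum_add_distrib, Finset.sum_sub_distrib,
      ← Finset.sum_mul, ← Finset.mul_sum, Finset.sum_const, nsmul_eq_mul]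
    field_simp
    ring
  have hcs : (∑ j ∈ s, u j) ^ 2 / (#s + 1) ^ 2 ≤ #s / (#s + 1) * gapForm s u := by
    rw [div_le_iff₀ (by positivity)]
    refine (sq_sum_le_card_mul_gapForm s u).trans_eq ?_
    field_simp
  calc ∑ k ∈ s, gapForm (s.erase k) u
      = #s * gapForm s u -
          (#s + 1) / #s * (gapForm s u - (∑ j ∈ s, u j) ^ 2 / (#s + 1) ^ 2) := by
        rw [Finset.sum_congr rfl herase, Finset.sum_sub_distrib, ← Finset.mul_sum, hvar,
          Finset.sum_const, nsmul_eq_mul]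
    _ ≤ #s * gapForm s u - (#s + 1) / #s * (gapForm s u - #s / (#s + 1) * gapForm s u) := by
        gcongr
    _ = (#s - 1 / #s) * gapForm s u := by
        field_simp
        ring

theorem exists_gapForm_erase_le {s : Finset ι} (hs : s.Nonempty) (u : ι → ℝ) :
    ∃ k ∈ s, gapForm (s.erase k) u ≤ (1 - 1 / #s ^ 2) * gapForm s u := by
  have hN : (#s : ℝ) ≠ 0 := Nat.cast_ne_zero.2 hs.card_pos.ne'
  refine Finset.exists_le_of_sum_le hs ((sum_gapForm_erase_le hs u).trans_eq ?_)
  rw [Finset.sum_const, nsmul_eq_mul]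
  field_simp

end GapForm

theorem sqrt_sub_mul_sq {a : ℝ} (ha : 0 < a) (c x : ℝ) :
    √(c - a * x ^ 2) = √a * √(√(c / a) ^ 2 - x ^ 2) := by
  rcases le_or_gt 0 c with hc | hc
  · rw [Real.sq_sqrt (by positivity), ← Real.sqrt_mul ha.le]
    congr 1
    field_simp
  · have hl : c - a * x ^ 2 ≤ 0 := by linarith [mul_nonneg ha.le (sq_nonneg x)]
    have hr : √(c / a) = 0 :=
      Real.sqrt_eq_zero_of_nonpos (div_nonpos_of_nonpos_of_nonneg hc.le ha.le)
    simp [hr, Real.sqrt_eq_zero_of_nonpos hl, Real.sqrt_eq_zero_of_nonpos, sq_nonneg x]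

section GapDensity

variable {ι : Type*} [Fintype ι]

/-- The function `(1 - Q)^(-1/2)` on the ellipsoid `Q < 1`, where `Q = gapForm univ`: up to a
constant, the density of the law of the differences of the coordinates of a uniformly distributed
point of the sphere. It vanishes off the ellipsoid because there `√(1 - Q) = 0`. -/
noncomputable def gapDensity (u : ι → ℝ) : ℝ≥0∞ :=
  ENNReal.ofReal (√(1 - gapForm Finset.univ u))⁻¹

@[fun_prop]
theorem measurable_gapDensity : Measurable (gapDensity (ι := ι)) := by
  unfold gapDensity
  fun_prop

variable [DecidableEq ι]

theorem exists_gapDensity_update_le (k : ι) (u : ι → ℝ) :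
    ∃ r b : ℝ, 0 ≤ r ∧ 1 - gapForm (Finset.univ.erase k) u ≤ r ^ 2 ∧
      ∀ t, gapDensity (update u k t) ≤ 2 * ENNReal.ofReal (√(r ^ 2 - (t - b) ^ 2))⁻¹ := by
  set N : ℝ := ((#(Finset.univ : Finset ι) : ℕ) : ℝ)
  set c := 1 - gapForm (Finset.univ.erase k) u with hc
  have hN : 1 ≤ N := Nat.one_le_cast.2 (Finset.card_pos.2 ⟨k, Finset.mem_univ k⟩)
  have ha : 0 < N / (N + 1) := by positivity
  refine ⟨√(c / (N / (N + 1))), (∑ j ∈ Finset.univ.erase k, u j) / N, Real.sqrt_nonneg _, ?_,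
    fun t => ?_⟩
  · rcases le_or_gt c 0 with hc0 | hc0
    · exact hc0.trans (sq_nonneg _)
    · rw [Real.sq_sqrt (by positivity), le_div_iff₀ ha]
      exact mul_le_of_le_one_right hc0.le ((div_le_one (by positivity)).2 (by linarith))
  · rw [gapDensity, gapForm_update (Finset.mem_univ k), add_comm, ← sub_sub, ← hc,
      sqrt_sub_mul_sq ha, mul_inv, ENNReal.ofReal_mul (by positivity)]
    gcongr
    have hsqrt : 2⁻¹ ≤ √(N / (N + 1)) := by
      refine Real.le_sqrt_of_sq_le ((le_div_iff₀ (by positivity)).2 ?_)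
      linarith
    exact ENNReal.ofReal_le_of_le_toReal (by simpa using inv_anti₀ (by norm_num) hsqrt)

theorem lintegral_gapDensity_update_le (k : ι) (u : ι → ℝ) :
    ∫⁻ t, gapDensity (update u k t) ≤ 18 := by
  obtain ⟨r, b, hr, -, hle⟩ := exists_gapDensity_update_le k u
  calc ∫⁻ t, gapDensity (update u k t)
      ≤ ∫⁻ t, 2 * ENNReal.ofReal (√(r ^ 2 - (t - b) ^ 2))⁻¹ := lintegral_mono hle
    _ = 2 * ∫⁻ t, ENNReal.ofReal (√(r ^ 2 - (t - b) ^ 2))⁻¹ :=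
        lintegral_const_mul _ (by fun_prop)
    _ ≤ 2 * 9 := by
        gcongr
        exact lintegral_inv_sqrt_sq_sub_sq_le (measurePreserving_sub_right volume b) hr
    _ = 18 := by norm_num

theorem setLIntegral_gapDensity_update_le (k : ι) {u : ι → ℝ} {ε : ℝ} (hε : 0 < ε)
    (hu : ε ^ 2 ≤ 1 - gapForm (Finset.univ.erase k) u) (s : Set ℝ) :
    ∫⁻ t in s, gapDensity (update u k t) ≤
      12 * ENNReal.ofReal (√ε)⁻¹ * volume s ^ (1 / 2 : ℝ) := by
  obtain ⟨r, b, hr, hur, hle⟩ := exists_gapDensity_update_le k u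
  have hεr : ε ≤ r := (pow_le_pow_iff_left₀ hε.le hr two_ne_zero).1 (hu.trans hur)
  calc ∫⁻ t in s, gapDensity (update u k t)
      ≤ ∫⁻ t in s, 2 * ENNReal.ofReal (√(r ^ 2 - (t - b) ^ 2))⁻¹ := lintegral_mono hle
    _ = 2 * ∫⁻ t in s, ENNReal.ofReal (√(r ^ 2 - (t - b) ^ 2))⁻¹ :=
        lintegral_const_mul _ (by fun_prop)
    _ ≤ 2 * (6 * ENNReal.ofReal (√r)⁻¹ * volume s ^ (1 / 2 : ℝ)) := by
        gcongr
        exact setLIntegral_inv_sqrt_sq_sub_sq_le (measurePreserving_sub_right volume b) hr s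
    _ ≤ 2 * (6 * ENNReal.ofReal (√ε)⁻¹ * volume s ^ (1 / 2 : ℝ)) := by gcongr
    _ = 12 * ENNReal.ofReal (√ε)⁻¹ * volume s ^ (1 / 2 : ℝ) := by ring

/-- The points whose line in direction `k` meets `{1 - gapForm univ ≥ (card ι)⁻²}`, i.e. on which
the maximum of `1 - gapForm univ` is bounded below. -/
def wideSlices (k : ι) : Set (ι → ℝ) :=
  {u | (Fintype.card ι : ℝ)⁻¹ ^ 2 ≤ 1 - gapForm (Finset.univ.erase k) u}

theorem measurableSet_wideSlices (k : ι) : MeasurableSet (wideSlices k) :=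
  measurableSet_le measurable_const (by fun_prop)

theorem update_mem_wideSlices_iff {k : ι} {u : ι → ℝ} {t : ℝ} :
    update u k t ∈ wideSlices k ↔ u ∈ wideSlices k := by
  simp only [wideSlices, mem_ofPred_eq, gapForm_erase_update]

theorem exists_mem_wideSlices [Nonempty ι] {u : ι → ℝ} (hu : gapForm Finset.univ u ≤ 1) :
    ∃ k, u ∈ wideSlices k := by
  obtain ⟨k, -, hk⟩ := exists_gapForm_erase_le Finset.univ_nonempty u
  have hN : (1 : ℝ) / Fintype.card ι ^ 2 ≤ 1 := by
    rw [div_le_one (by positivity)]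
    exact one_le_pow₀ (Nat.one_le_cast.2 Fintype.card_pos)
  refine ⟨k, ?_⟩
  have := mul_le_of_le_one_right (sub_nonneg.2 hN) hu
  rw [Finset.card_univ] at hk
  rw [wideSlices, mem_ofPred_eq, inv_pow, inv_eq_one_div]
  linarith

theorem gapDensity_le_sum_indicator_wideSlices [Nonempty ι] (u : ι → ℝ) :
    gapDensity u ≤ ∑ k, (wideSlices k).indicator gapDensity u := by
  rcases le_or_gt (gapForm Finset.univ u) 1 with hu | hu
  · obtain ⟨k, hk⟩ := exists_mem_wideSlices hu
    calc gapDensity u = (wideSlices k).indicator gapDensity u := (indicator_of_mem hk _).symm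
      _ ≤ ∑ k, (wideSlices k).indicator gapDensity u :=
        Finset.single_le_sum (f := fun k => (wideSlices k).indicator gapDensity u)
          (fun _ _ => zero_le) (Finset.mem_univ k)
  · simp [gapDensity, Real.sqrt_eq_zero_of_nonpos (sub_nonpos.2 hu.le)]

theorem setLIntegral_pi_gapDensity_le_prod_erase (E : ι → Set ℝ) (k : ι) :
    ∫⁻ u in univ.pi E, gapDensity u ≤ 18 * ∏ j ∈ Finset.univ.erase k, volume (E j) :=
  setLIntegral_pi_le_mul_prod_erase measurable_gapDensity k fun u =>
    (setLIntegral_le_lintegral _ _).trans (lintegral_gapDensity_update_le k u)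

theorem setLIntegral_pi_indicator_wideSlices_le (E : ι → Set ℝ) (k : ι) :
    ∫⁻ u in univ.pi E, (wideSlices k).indicator gapDensity u ≤
      12 * ENNReal.ofReal √(Fintype.card ι) * volume (E k) ^ (1 / 2 : ℝ) *
        ∏ j ∈ Finset.univ.erase k, volume (E j) := by
  have : Nonempty ι := ⟨k⟩
  refine setLIntegral_pi_le_mul_prod_erase
    (measurable_gapDensity.indicator (measurableSet_wideSlices k)) k fun u => ?_
  by_cases hu : u ∈ wideSlices k
  · calc ∫⁻ t in E k, (wideSlices k).indicator gapDensity (update u k t)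
        = ∫⁻ t in E k, gapDensity (update u k t) :=
          lintegral_congr fun t => indicator_of_mem (update_mem_wideSlices_iff.2 hu) _
      _ ≤ 12 * ENNReal.ofReal (√(Fintype.card ι : ℝ)⁻¹)⁻¹ * volume (E k) ^ (1 / 2 : ℝ) :=
          setLIntegral_gapDensity_update_le k (by positivity) hu _
      _ = 12 * ENNReal.ofReal √(Fintype.card ι) * volume (E k) ^ (1 / 2 : ℝ) := by
          rw [Real.sqrt_inv, inv_inv]
  · simp [update_mem_wideSlices_iff, hu]

theorem setLIntegral_pi_indicator_wideSlices_le_prod_rpow (E : ι → Set ℝ) (k : ι) :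
    ∫⁻ u in univ.pi E, (wideSlices k).indicator gapDensity u ≤
      18 * Fintype.card ι *
        ∏ j, volume (E j) ^ ((Fintype.card ι : ℝ) / (Fintype.card ι + 1)) := by
  have hN : 1 ≤ Fintype.card ι := Fintype.card_pos_iff.2 ⟨k⟩
  have hsqrt : ENNReal.ofReal √(Fintype.card ι) ≤ Fintype.card ι :=
    ENNReal.ofReal_le_of_le_toReal <| by
      rw [ENNReal.toReal_natCast]
      exact Real.sqrt_le_self_iff.2 (.inr (Nat.one_le_cast.2 hN))
  refine le_mul_prod_rpow_of_forall_le_prod_erase k ?_ fun m => ?_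
  · refine (setLIntegral_pi_indicator_wideSlices_le E k).trans ?_
    gcongr
    norm_num
  · calc ∫⁻ u in univ.pi E, (wideSlices k).indicator gapDensity u
        ≤ ∫⁻ u in univ.pi E, gapDensity u := lintegral_mono (indicator_le_self _ _)
      _ ≤ 18 * ∏ j ∈ Finset.univ.erase m, volume (E j) :=
        setLIntegral_pi_gapDensity_le_prod_erase E m
      _ ≤ 18 * Fintype.card ι * ∏ j ∈ Finset.univ.erase m, volume (E j) := by
        gcongr
        exact le_mul_of_one_le_right' (Nat.one_le_cast.2 hN)

end GapDensity

theorem setLIntegral_pi_gapDensity_le {ι : Type*} [Fintype ι] [Nonempty ι] (E : ι → Set ℝ) :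
    ∫⁻ u in univ.pi E, gapDensity u ≤
      18 * Fintype.card ι ^ 2 *
        ∏ j, volume (E j) ^ ((Fintype.card ι : ℝ) / (Fintype.card ι + 1)) := by
  classical
  calc ∫⁻ u in univ.pi E, gapDensity u
      ≤ ∫⁻ u in univ.pi E, ∑ k, (wideSlices k).indicator gapDensity u :=
        lintegral_mono gapDensity_le_sum_indicator_wideSlices
    _ = ∑ k, ∫⁻ u in univ.pi E, (wideSlices k).indicator gapDensity u :=
        lintegral_finsetSum _ fun k _ =>
          measurable_gapDensity.indicator (measurableSet_wideSlices k)
    _ ≤ ∑ _k : ι, 18 * Fintype.card ι *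
          ∏ j, volume (E j) ^ ((Fintype.card ι : ℝ) / (Fintype.card ι + 1)) :=
        Finset.sum_le_sum fun k _ => setLIntegral_pi_indicator_wideSlices_le_prod_rpow E k
    _ = 18 * Fintype.card ι ^ 2 *
          ∏ j, volume (E j) ^ ((Fintype.card ι : ℝ) / (Fintype.card ι + 1)) := by
        rw [Finset.sum_const, Finset.card_univ, nsmul_eq_mul]
        ring

/-! ### The law of the coordinate differences -/

theorem lintegral_eq_two_mul_setLIntegral_Ioi {f : ℝ → ℝ≥0∞} (hf : ∀ x, f (-x) = f x) :
    ∫⁻ x, f x = 2 * ∫⁻ x in Ioi 0, f x := by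
  have hneg : ∫⁻ x in Iic 0, f x = ∫⁻ x in Ioi 0, f x := by
    have h := (Measure.measurePreserving_neg (volume : Measure ℝ)).setLIntegral_comp_preimage_emb
      (MeasurableEquiv.neg ℝ).measurableEmbedding f (Iio 0)
    simp only [hf, neg_preimage, neg_Iio, neg_zero] at h
    rw [h, setLIntegral_congr Iio_ae_eq_Iic]
  rw [← lintegral_add_compl f (measurableSet_Ioi (a := 0)), compl_Ioi, hneg, two_mul]

theorem image_sqrt_sq_sub_div {a q : ℝ} (ha : 0 < a) (hq : 0 ≤ q) :
    (fun ρ => √((ρ ^ 2 - q) / a)) '' Ioi √q = Ioi 0 := by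
  ext s
  constructor
  · rintro ⟨ρ, hρ, rfl⟩
    exact Real.sqrt_pos.2 (div_pos (sub_pos.2 (Real.lt_sq_of_sqrt_lt hρ)) ha)
  · intro hs
    have hs0 : 0 < s := hs
    have hlt : q < a * s ^ 2 + q := lt_add_of_pos_left q (by positivity)
    refine ⟨√(a * s ^ 2 + q), Real.sqrt_lt_sqrt hq hlt, ?_⟩
    dsimp only
    rw [Real.sq_sqrt (by positivity), add_sub_cancel_right, mul_div_cancel_left₀ _ ha.ne',
      Real.sqrt_sq hs0.le]

theorem hasDerivAt_sqrt_sq_sub_div {a q ρ : ℝ} (ha : 0 < a) (hρ : 0 < ρ ^ 2 - q) :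
    HasDerivAt (fun ρ => √((ρ ^ 2 - q) / a)) (ρ / √(a * (ρ ^ 2 - q))) ρ := by
  have hin : HasDerivAt (fun ρ : ℝ => (ρ ^ 2 - q) / a) (2 * ρ / a) ρ := by
    simpa using ((hasDerivAt_pow 2 ρ).sub_const q).div_const a
  refine (hin.sqrt (div_pos hρ ha).ne').congr_deriv ?_
  rw [show a * (ρ ^ 2 - q) = (ρ ^ 2 - q) / a * a ^ 2 by field_simp,
    Real.sqrt_mul' _ (sq_nonneg a), Real.sqrt_sq ha.le]
  field_simp

theorem setLIntegral_Ioi_comp_sqrt_mul_sq_add {a q : ℝ} (ha : 0 < a) (hq : 0 ≤ q)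
    (h : ℝ → ℝ≥0∞) :
    ∫⁻ s in Ioi 0, h √(a * s ^ 2 + q) =
      ∫⁻ ρ in Ioi 0, ENNReal.ofReal (ρ / √(a * (ρ ^ 2 - q))) * h ρ := by
  set φ : ℝ → ℝ := fun ρ => √((ρ ^ 2 - q) / a) with hφ
  have hpos : ∀ ρ ∈ Ioi √q, 0 < ρ ^ 2 - q := fun ρ hρ => sub_pos.2 (Real.lt_sq_of_sqrt_lt hρ)
  have hinv : ∀ ρ ∈ Ioi √q, √(a * φ ρ ^ 2 + q) = ρ := fun ρ hρ => by
    have hρ0 : 0 ≤ ρ := (Real.sqrt_nonneg q).trans (le_of_lt hρ)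
    rw [hφ, Real.sq_sqrt (div_nonneg (hpos ρ hρ).le ha.le), mul_div_cancel₀ _ ha.ne',
      sub_add_cancel, Real.sqrt_sq hρ0]
  have hzero : ∀ ρ ∈ Ioi 0 \ Ioi √q, ENNReal.ofReal (ρ / √(a * (ρ ^ 2 - q))) * h ρ = 0 := by
    rintro ρ ⟨hρ0, hρ⟩
    have : ρ ^ 2 ≤ q := (Real.le_sqrt (le_of_lt hρ0) hq).1 (not_lt.1 hρ)
    rw [Real.sqrt_eq_zero_of_nonpos (mul_nonpos_of_nonneg_of_nonpos ha.le (sub_nonpos.2 this))]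
    simp
  calc ∫⁻ s in Ioi 0, h √(a * s ^ 2 + q)
      = ∫⁻ s in φ '' Ioi √q, h √(a * s ^ 2 + q) := by rw [image_sqrt_sq_sub_div ha hq]
    _ = ∫⁻ ρ in Ioi √q,
          ENNReal.ofReal |ρ / √(a * (ρ ^ 2 - q))| * h √(a * φ ρ ^ 2 + q) :=
        lintegral_image_eq_lintegral_abs_deriv_mul measurableSet_Ioi
          (fun ρ hρ => (hasDerivAt_sqrt_sq_sub_div ha (hpos ρ hρ)).hasDerivWithinAt)
          (LeftInvOn.injOn (f₁' := fun s => √(a * s ^ 2 + q)) hinv) _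
    _ = ∫⁻ ρ in Ioi √q, ENNReal.ofReal (ρ / √(a * (ρ ^ 2 - q))) * h ρ := by
        refine setLIntegral_congr_fun measurableSet_Ioi fun ρ hρ => ?_
        have hρ0 : 0 ≤ ρ := (Real.sqrt_nonneg q).trans (le_of_lt hρ)
        simp only [hinv ρ hρ, abs_of_nonneg (div_nonneg hρ0 (Real.sqrt_nonneg _))]
    _ = ∫⁻ ρ in Ioi 0, ENNReal.ofReal (ρ / √(a * (ρ ^ 2 - q))) * h ρ := by
        rw [← lintegral_inter_add_sdiff _ (Ioi 0) (measurableSet_Ioi (a := √q)),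
          inter_eq_right.2 (Ioi_subset_Ioi (Real.sqrt_nonneg q)),
          setLIntegral_eq_zero (measurableSet_Ioi.diff measurableSet_Ioi) hzero, add_zero]

theorem lintegral_comp_sqrt_sq_add_sum_sq {ι : Type*} (h : ℝ → ℝ≥0∞) (s : Finset ι)
    (u : ι → ℝ) :
    ∫⁻ x : ℝ, h √(x ^ 2 + ∑ j ∈ s, (x - u j) ^ 2) =
      2 * ∫⁻ ρ in Ioi 0, ENNReal.ofReal (ρ / √((#s + 1) * (ρ ^ 2 - gapForm s u))) * h ρ := by
  calc ∫⁻ x : ℝ, h √(x ^ 2 + ∑ j ∈ s, (x - u j) ^ 2)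
      = ∫⁻ x : ℝ, h √((#s + 1) * (x - (∑ j ∈ s, u j) / (#s + 1)) ^ 2 + gapForm s u) := by
        simp only [card_add_one_mul_sq_add_gapForm]
    _ = ∫⁻ x : ℝ, h √((#s + 1) * x ^ 2 + gapForm s u) :=
        lintegral_sub_right_eq_self (fun x => h √((#s + 1) * x ^ 2 + gapForm s u)) _
    _ = 2 * ∫⁻ x in Ioi 0, h √((#s + 1) * x ^ 2 + gapForm s u) :=
        lintegral_eq_two_mul_setLIntegral_Ioi fun x => by rw [neg_sq]
    _ = 2 * ∫⁻ ρ in Ioi 0, ENNReal.ofReal (ρ / √((#s + 1) * (ρ ^ 2 - gapForm s u))) * h ρ := by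
        rw [setLIntegral_Ioi_comp_sqrt_mul_sq_add (by positivity) (gapForm_nonneg s u)]

theorem lintegral_inv_smul {E : Type*} [NormedAddCommGroup E] [NormedSpace ℝ E]
    [FiniteDimensional ℝ E] [MeasurableSpace E] [BorelSpace E] (μ : Measure E)
    [μ.IsAddHaarMeasure] {f : E → ℝ≥0∞} (hf : Measurable f) {r : ℝ} (hr : 0 < r) :
    ∫⁻ x, f (r⁻¹ • x) ∂μ =
      ENNReal.ofReal (r ^ Module.finrank ℝ E) * ∫⁻ x, f x ∂μ := by
  rw [← lintegral_map hf (measurable_const_smul _), Measure.map_addHaar_smul μ (inv_ne_zero hr.ne'),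
    lintegral_smul_measure, smul_eq_mul, inv_pow, inv_inv, abs_of_pos (by positivity)]

section Gaps

variable {d : ℕ}

/-- The differences `x_{d+1} - xⱼ` of the last coordinate of a point of `ℝ^(d+1)` and the
others. -/
def gaps (x : EuclideanSpace ℝ (Fin (d + 1))) : Fin d → ℝ :=
  fun j => x (Fin.last d) - x j.castSucc

@[fun_prop]
theorem measurable_gaps : Measurable (gaps (d := d)) := by
  unfold gaps
  fun_prop

theorem gaps_smul (r : ℝ) (x : EuclideanSpace ℝ (Fin (d + 1))) : gaps (r • x) = r • gaps x := by
  ext j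
  simp [gaps, mul_sub]

theorem lintegral_comp_gaps_norm {w : (Fin d → ℝ) × ℝ → ℝ≥0∞} (hw : Measurable w) :
    ∫⁻ x : EuclideanSpace ℝ (Fin (d + 1)), w (gaps x, ‖x‖) =
      ∫⁻ u : Fin d → ℝ, ∫⁻ s : ℝ, w (u, √(s ^ 2 + ∑ j, (s - u j) ^ 2)) := by
  have hsnoc := (volume_preserving_piFinSuccAbove (fun _ => ℝ) (Fin.last d)).symm
  have htoLp := (PiLp.volume_preserving_toLp (Fin (d + 1))).comp hsnoc
  calc ∫⁻ x : EuclideanSpace ℝ (Fin (d + 1)), w (gaps x, ‖x‖)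
      = ∫⁻ s : ℝ, ∫⁻ y : Fin d → ℝ, w ((fun _ => s) - y, √(s ^ 2 + ∑ j, y j ^ 2)) := by
        rw [← htoLp.lintegral_comp (by fun_prop), Measure.volume_eq_prod,
          lintegral_prod _ (by fun_prop)]
        refine lintegral_congr fun s => lintegral_congr fun y => ?_
        have hlast : (MeasurableEquiv.piFinSuccAbove (fun _ => ℝ) (Fin.last d)).symm (s, y) =
            Fin.snoc (α := fun _ => ℝ) y s :=
          Fin.insertNth_last' s y
        have hgaps : gaps (WithLp.toLp 2 (Fin.snoc (α := fun _ => ℝ) y s)) = (fun _ => s) - y := by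
          ext j
          simp [gaps]
        rw [comp_apply, hlast, hgaps, EuclideanSpace.norm_eq]
        simp [Fin.sum_univ_castSucc, add_comm]
    _ = ∫⁻ s : ℝ, ∫⁻ u : Fin d → ℝ, w (u, √(s ^ 2 + ∑ j, (s - u j) ^ 2)) := by
        refine lintegral_congr fun s => ?_
        rw [← lintegral_sub_left_eq_self _ (fun _ : Fin d => s)]
        simp
    _ = ∫⁻ u : Fin d → ℝ, ∫⁻ s : ℝ, w (u, √(s ^ 2 + ∑ j, (s - u j) ^ 2)) :=
        lintegral_lintegral_swap (by fun_prop)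

theorem lintegral_comp_gaps_norm_eq_density {w : (Fin d → ℝ) × ℝ → ℝ≥0∞} (hw : Measurable w) :
    ∫⁻ x : EuclideanSpace ℝ (Fin (d + 1)), w (gaps x, ‖x‖) =
      2 * ∫⁻ ρ in Ioi 0, ∫⁻ u : Fin d → ℝ,
        ENNReal.ofReal (ρ / √((d + 1) * (ρ ^ 2 - gapForm Finset.univ u))) * w (u, ρ) := by
  rw [lintegral_comp_gaps_norm hw]
  simp_rw [fun u => lintegral_comp_sqrt_sq_add_sum_sq (fun ρ => w (u, ρ)) Finset.univ u,
    Finset.card_univ, Fintype.card_fin]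
  rw [lintegral_const_mul _ (by fun_prop), lintegral_lintegral_swap (by fun_prop)]

theorem ofReal_div_sqrt_eq_gapDensity {ρ : ℝ} (hρ : 0 < ρ) (a : ℝ) (ha : 0 ≤ a) (u : Fin d → ℝ) :
    ENNReal.ofReal (ρ / √(a * (ρ ^ 2 - gapForm Finset.univ u))) =
      ENNReal.ofReal (√a)⁻¹ * gapDensity (ρ⁻¹ • u) := by
  have : a * (ρ ^ 2 - gapForm Finset.univ u) =
      ρ ^ 2 * (a * (1 - gapForm Finset.univ (ρ⁻¹ • u))) := by
    rw [gapForm_smul]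
    field_simp
  rw [gapDensity, ← ENNReal.ofReal_mul (by positivity), this, Real.sqrt_mul (sq_nonneg ρ),
    Real.sqrt_sq hρ.le, Real.sqrt_mul ha, ← mul_inv]
  congr 1
  field_simp

theorem setLIntegral_Ioo_zero_one_ofReal_pow (d : ℕ) :
    ∫⁻ ρ in Ioo (0 : ℝ) 1, ENNReal.ofReal (ρ ^ d) = (d + 1 : ℝ≥0∞)⁻¹ := by
  rw [setLIntegral_congr Ioo_ae_eq_Ioc,
    ← ofReal_integral_eq_lintegral_ofReal ((continuous_pow d).integrableOn_Ioc)
      ((ae_restrict_mem measurableSet_Ioc).mono fun ρ hρ => pow_nonneg hρ.1.le d),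
    ← intervalIntegral.integral_of_le zero_le_one, integral_pow, one_pow, zero_pow d.succ_ne_zero,
    sub_zero, one_div, ENNReal.ofReal_inv_of_pos (by positivity)]
  exact_mod_cast congrArg _ (ENNReal.ofReal_natCast (d + 1))

theorem Ioo_zero_one_smul_gaps_preimage (G : Set (Fin d → ℝ)) :
    Ioo (0 : ℝ) 1 • (Subtype.val ''
        {σ : Metric.sphere (0 : EuclideanSpace ℝ (Fin (d + 1))) 1 | gaps σ.1 ∈ G}) =
      (fun x => ‖x‖⁻¹ • gaps x) ⁻¹' G ∩ norm ⁻¹' Ioo 0 1 := by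
  ext x
  constructor
  · rintro ⟨r, hr, _, ⟨σ, hσ, rfl⟩, rfl⟩
    have hnorm : ‖r • σ.1‖ = r := by
      rw [norm_smul, norm_eq_of_mem_sphere σ, mul_one, Real.norm_of_nonneg hr.1.le]
    rw [mem_inter_iff, mem_preimage, mem_preimage, hnorm, gaps_smul, inv_smul_smul₀ hr.1.ne']
    exact ⟨hσ, hr⟩
  · rintro ⟨hG, hx⟩
    have hx0 : ‖x‖ ≠ 0 := hx.1.ne'
    have hσ : ‖x‖⁻¹ • x ∈ Metric.sphere (0 : EuclideanSpace ℝ (Fin (d + 1))) 1 := by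
      simp [norm_smul, hx0]
    exact ⟨‖x‖, hx, _, ⟨⟨_, hσ⟩, by simpa [gaps_smul] using hG, rfl⟩, smul_inv_smul₀ hx0 x⟩

theorem lintegral_ofReal_div_sqrt_mul_comp_inv_smul {f : (Fin d → ℝ) → ℝ≥0∞} (hf : Measurable f)
    {ρ : ℝ} (hρ : 0 < ρ) :
    ∫⁻ u : Fin d → ℝ,
        ENNReal.ofReal (ρ / √((d + 1) * (ρ ^ 2 - gapForm Finset.univ u))) * f (ρ⁻¹ • u) =
      ENNReal.ofReal (ρ ^ d) * (ENNReal.ofReal (√(d + 1))⁻¹ * ∫⁻ u, gapDensity u * f u) := by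
  have hm : Measurable fun u => gapDensity u * f u := measurable_gapDensity.mul hf
  calc ∫⁻ u : Fin d → ℝ,
        ENNReal.ofReal (ρ / √((d + 1) * (ρ ^ 2 - gapForm Finset.univ u))) * f (ρ⁻¹ • u)
      = ∫⁻ u : Fin d → ℝ,
          ENNReal.ofReal (√(d + 1))⁻¹ * (gapDensity (ρ⁻¹ • u) * f (ρ⁻¹ • u)) := by
        simp_rw [fun u : Fin d → ℝ => ofReal_div_sqrt_eq_gapDensity hρ (d + 1) (by positivity) u,
          mul_assoc]
    _ = ENNReal.ofReal (√(d + 1))⁻¹ *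
          ∫⁻ u : Fin d → ℝ, gapDensity (ρ⁻¹ • u) * f (ρ⁻¹ • u) :=
        lintegral_const_mul _ (hm.comp (measurable_const_smul ρ⁻¹))
    _ = ENNReal.ofReal (ρ ^ d) * (ENNReal.ofReal (√(d + 1))⁻¹ * ∫⁻ u, gapDensity u * f u) := by
        rw [lintegral_inv_smul volume hm hρ, Module.finrank_fin_fun, mul_left_comm]

theorem setLIntegral_comp_inv_norm_smul_gaps {f : (Fin d → ℝ) → ℝ≥0∞} (hf : Measurable f) :
    ∫⁻ x : EuclideanSpace ℝ (Fin (d + 1)) in norm ⁻¹' Ioo 0 1, f (‖x‖⁻¹ • gaps x) =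
      (d + 1 : ℝ≥0∞)⁻¹ * (2 * ENNReal.ofReal (√(d + 1))⁻¹ * ∫⁻ u, gapDensity u * f u) := by
  set w : (Fin d → ℝ) × ℝ → ℝ≥0∞ := (Prod.snd ⁻¹' Ioo 0 1).indicator fun p => f (p.2⁻¹ • p.1)
  have hw : Measurable w := by
    exact (hf.comp (by fun_prop)).indicator (measurable_snd measurableSet_Ioo)
  calc ∫⁻ x : EuclideanSpace ℝ (Fin (d + 1)) in norm ⁻¹' Ioo 0 1, f (‖x‖⁻¹ • gaps x)
      = ∫⁻ x : EuclideanSpace ℝ (Fin (d + 1)), w (gaps x, ‖x‖) :=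
        (lintegral_indicator (measurable_norm measurableSet_Ioo) _).symm
    _ = 2 * ∫⁻ ρ in Ioi 0, (Ioo 0 1).indicator (fun ρ => ∫⁻ u : Fin d → ℝ,
          ENNReal.ofReal (ρ / √((d + 1) * (ρ ^ 2 - gapForm Finset.univ u))) *
            f (ρ⁻¹ • u)) ρ := by
        rw [lintegral_comp_gaps_norm_eq_density hw]
        congr! with ρ
        by_cases hρ : ρ ∈ Ioo (0 : ℝ) 1 <;> simp [w, indicator, hρ]
    _ = 2 * ∫⁻ ρ in Ioo (0 : ℝ) 1, ENNReal.ofReal (ρ ^ d) *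
          (ENNReal.ofReal (√(d + 1))⁻¹ * ∫⁻ u, gapDensity u * f u) := by
        rw [setLIntegral_indicator measurableSet_Ioo, inter_eq_left.2 Ioo_subset_Ioi_self]
        exact congrArg _ <| setLIntegral_congr_fun measurableSet_Ioo fun ρ hρ =>
          lintegral_ofReal_div_sqrt_mul_comp_inv_smul hf hρ.1
    _ = (d + 1 : ℝ≥0∞)⁻¹ *
          (2 * ENNReal.ofReal (√(d + 1))⁻¹ * ∫⁻ u, gapDensity u * f u) := by
        rw [lintegral_mul_const _ (by fun_prop), setLIntegral_Ioo_zero_one_ofReal_pow]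
        ring

theorem map_gaps_toSphere :
    (volume : Measure (EuclideanSpace ℝ (Fin (d + 1)))).toSphere.map (fun σ => gaps σ.1) =
      (2 * ENNReal.ofReal (√(d + 1))⁻¹) • volume.withDensity gapDensity := by
  ext G hG
  have hgaps : Measurable fun σ : Metric.sphere (0 : EuclideanSpace ℝ (Fin (d + 1))) 1 =>
      gaps σ.1 := measurable_gaps.comp measurable_subtype_coe
  have hcone : MeasurableSet
      ((fun x : EuclideanSpace ℝ (Fin (d + 1)) => ‖x‖⁻¹ • gaps x) ⁻¹' G) :=
    (by fun_prop : Measurable fun x : EuclideanSpace ℝ (Fin (d + 1)) => ‖x‖⁻¹ • gaps x) hG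
  have hvol : volume ((fun x : EuclideanSpace ℝ (Fin (d + 1)) => ‖x‖⁻¹ • gaps x) ⁻¹' G ∩
      norm ⁻¹' Ioo 0 1) =
      (d + 1 : ℝ≥0∞)⁻¹ * (2 * ENNReal.ofReal (√(d + 1))⁻¹ * ∫⁻ u in G, gapDensity u) := by
    have hmul : ∀ u : Fin d → ℝ, gapDensity u * G.indicator 1 u = G.indicator gapDensity u :=
      fun u => by by_cases hu : u ∈ G <;> simp [hu]
    rw [← Measure.restrict_apply hcone, ← lintegral_indicator_one hcone,
      ← lintegral_indicator hG, ← lintegral_congr hmul,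
      ← setLIntegral_comp_inv_norm_smul_gaps (measurable_one.indicator hG)]
    rfl
  rw [Measure.map_apply hgaps hG, Measure.toSphere_apply' _ (hgaps hG), preimage,
    Ioo_zero_one_smul_gaps_preimage, hvol, finrank_euclideanSpace_fin, Nat.cast_succ,
    Measure.smul_apply, withDensity_apply _ hG, smul_eq_mul,
    ENNReal.mul_inv_cancel_left (by simp) (by finiteness)]

theorem exists_map_gaps_normSphere_eq (d : ℕ) :
    ∃ c ≠ ∞, (normSphere (d + 1)).map gaps = c • volume.withDensity (gapDensity (ι := Fin d)) := by
  set S := (volume : Measure (EuclideanSpace ℝ (Fin (d + 1)))).toSphere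
  have hmass : S.map Subtype.val univ ≠ 0 := by
    rw [Measure.map_apply measurable_subtype_coe .univ, preimage_univ, Ne,
      Measure.measure_univ_eq_zero]
    exact Measure.toSphere_ne_zero _
  refine ⟨(S.map Subtype.val univ)⁻¹ * (2 * ENNReal.ofReal (√(d + 1))⁻¹),
    by finiteness, ?_⟩
  rw [normSphere, Measure.map_smul, Measure.map_map measurable_gaps measurable_subtype_coe,
    mul_smul, ← map_gaps_toSphere]
  rfl

theorem exists_map_gaps_normSphere_pi_le [NeZero d] :
    ∃ C : ℝ, 0 < C ∧ ∀ E : Fin d → Set ℝ, (∀ j, MeasurableSet (E j)) →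
      (normSphere (d + 1)).map gaps (univ.pi E) ≤
        ENNReal.ofReal C * ∏ j, volume (E j) ^ ((d : ℝ) / (d + 1)) := by
  obtain ⟨c, hc, hlaw⟩ := exists_map_gaps_normSphere_eq d
  set D : ℝ≥0∞ := c * (18 * d ^ 2)
  have hD : D ≠ ∞ := by finiteness
  refine ⟨D.toReal + 1, by positivity, fun E hE => ?_⟩
  have hDle : D ≤ ENNReal.ofReal (D.toReal + 1) := by
    rw [ENNReal.le_ofReal_iff_toReal_le hD (by positivity)]
    exact (lt_add_one _).le
  calc (normSphere (d + 1)).map gaps (univ.pi E)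
      = c * ∫⁻ u in univ.pi E, gapDensity u := by
        rw [hlaw, Measure.smul_apply, withDensity_apply _ (.univ_pi hE), smul_eq_mul]
    _ ≤ c * (18 * d ^ 2 * ∏ j, volume (E j) ^ ((d : ℝ) / (d + 1))) := by
        gcongr
        simpa using setLIntegral_pi_gapDensity_le E
    _ = D * ∏ j, volume (E j) ^ ((d : ℝ) / (d + 1)) := (mul_assoc _ _ _).symm
    _ ≤ ENNReal.ofReal (D.toReal + 1) * ∏ j, volume (E j) ^ ((d : ℝ) / (d + 1)) := by gcongr

instance instSFiniteNormSphere (n : ℕ) : SFinite (normSphere n) := by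
  unfold normSphere
  infer_instance

theorem lintegral_sphAvg_succ {f : Fin (d + 1) → ℝ → ℝ} (hf : ∀ j, Measurable (f j)) :
    ∫⁻ x, sphAvg (d + 1) f x = ∫⁻ x, ENNReal.ofReal (f (Fin.last d) x) *
      ∫⁻ u, ∏ j : Fin d, ENNReal.ofReal (f j.castSucc (x + u j))
        ∂(normSphere (d + 1)).map gaps := by
  calc ∫⁻ x, sphAvg (d + 1) f x
      = ∫⁻ σ, ∫⁻ x, ∏ j, ENNReal.ofReal (f j (x - σ j)) ∂volume ∂normSphere (d + 1) :=
        lintegral_lintegral_swap (by fun_prop)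
    _ = ∫⁻ σ, ∫⁻ x, ENNReal.ofReal (f (Fin.last d) x) *
          ∏ j : Fin d, ENNReal.ofReal (f j.castSucc (x + gaps σ j)) ∂volume
          ∂normSphere (d + 1) := by
        refine lintegral_congr fun σ => ?_
        rw [← lintegral_add_right_eq_self _ (σ (Fin.last d))]
        refine lintegral_congr fun x => ?_
        rw [Fin.prod_univ_castSucc, add_sub_cancel_right, mul_comm]
        simp only [gaps, add_sub_assoc]
    _ = ∫⁻ x, ∫⁻ σ, ENNReal.ofReal (f (Fin.last d) x) *
          ∏ j : Fin d, ENNReal.ofReal (f j.castSucc (x + gaps σ j)) ∂normSphere (d + 1) := by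
        refine lintegral_lintegral_swap ?_
        unfold gaps
        fun_prop
    _ = ∫⁻ x, ENNReal.ofReal (f (Fin.last d) x) *
          ∫⁻ u, ∏ j : Fin d, ENNReal.ofReal (f j.castSucc (x + u j))
            ∂(normSphere (d + 1)).map gaps := by
        refine lintegral_congr fun x => ?_
        rw [lintegral_map (by fun_prop) measurable_gaps, lintegral_const_mul]
        unfold gaps
        fun_prop

theorem lintegral_prod_ofReal_indicator_one {ι : Type*} [Fintype ι] {μ : Measure (ι → ℝ)}
    {E : ι → Set ℝ} (hE : ∀ j, MeasurableSet (E j)) :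
    ∫⁻ u, ∏ j, ENNReal.ofReal ((E j).indicator (fun _ => 1) (u j)) ∂μ = μ (univ.pi E) := by
  rw [← lintegral_indicator_one (.univ_pi hE)]
  refine lintegral_congr fun u => ?_
  classical
  simp [indicator, apply_ite ENNReal.ofReal, Finset.prod_ite_zero]

theorem lpNorm_one_eq_lintegral (g : ℝ → ℝ≥0∞) : _root_.lpNorm 1 g = ∫⁻ x, g x := by
  simp [_root_.lpNorm]

end Gaps

theorem restricted_type_at_P_general (n : ℕ) (hn : 2 ≤ n) :
    ∃ C : ℝ, 0 < C ∧ ∀ I : Fin (n - 1) → Set ℝ, (∀ j, MeasurableSet (I j)) →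
      ∀ fn : ℝ → ℝ≥0, Measurable fn →
      _root_.lpNorm 1 (sphAvg n (fun j =>
          if h : (j : ℕ) < n - 1 then (I ⟨j, h⟩).indicator fun _ => (1 : ℝ)
          else fun x => fn x)) ≤
        ENNReal.ofReal C * (∏ j, volume (I j) ^ (((n : ℝ) - 1) / n)) *
          _root_.lpNorm 1 (fun x => fn x) := by
  obtain ⟨d, rfl⟩ : ∃ d, n = d + 1 := ⟨n - 1, by omega⟩
  have : NeZero d := ⟨by omega⟩
  obtain ⟨C, hC0, hC⟩ := exists_map_gaps_normSphere_pi_le (d := d)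
  refine ⟨C, hC0, fun I hI fn hfn => ?_⟩
  have hf : ∀ j : Fin (d + 1), Measurable (if h : (j : ℕ) < d + 1 - 1
      then (I ⟨j, h⟩).indicator fun _ => (1 : ℝ) else fun x => fn x) := fun j => by
    split_ifs
    · exact measurable_const.indicator (hI _)
    · fun_prop
  have hx : ∀ x, ∫⁻ u, ∏ j, ENNReal.ofReal ((I j).indicator (fun _ => 1) (x + u j))
      ∂(normSphere (d + 1)).map gaps ≤
        ENNReal.ofReal C * ∏ j, volume (I j) ^ ((d : ℝ) / (d + 1)) := fun x => by
    have hE : ∀ j : Fin d, MeasurableSet ((x + ·) ⁻¹' I j) := fun j =>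
      measurable_const_add x (hI j)
    have hle := (lintegral_prod_ofReal_indicator_one hE).trans_le (hC _ hE)
    simp only [measure_preimage_add] at hle
    exact hle
  rw [lpNorm_one_eq_lintegral, lpNorm_one_eq_lintegral, lintegral_sphAvg_succ hf,
    ← lintegral_const_mul _ (by fun_prop)]
  refine lintegral_mono fun x => ?_
  simpa [mul_comm] using mul_le_mul_right (hx x) (fn x)

end

theorem restricted_type_at_P (n : ℕ) (hn : 3 ≤ n) :
    ∃ C : ℝ, 0 < C ∧ ∀ I : Fin (n - 1) → Set ℝ,
      (∀ j, MeasurableSet (I j)) → (∀ j, volume (I j) < ∞) →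
      ∀ fn : ℝ → ℝ, Measurable fn → (∀ x, 0 ≤ fn x) →
      lpNorm 1 (sphAvg n (fun j =>
          if h : (j : ℕ) < n - 1 then (I ⟨j, h⟩).indicator fun _ => (1 : ℝ) else fn)) ≤
        ENNReal.ofReal C * (∏ j, volume (I j) ^ (((n : ℝ) - 1) / n)) *
          lpNorm 1 (fun x => ENNReal.ofReal (fn x)) := by
  obtain ⟨C, hC0, hC⟩ := restricted_type_at_P_general n (by omega)
  refine ⟨C, hC0, fun I hI _ fn hfn h0 => ?_⟩
  lift fn to ℝ → NNReal using h0
  simpa using hC I hI fn (measurable_coe_nnreal_real_iff.1 hfn)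
end

section
/- Let n ≥ 3 be an integer. There exists a finite constant C > 0, depending only on n, such that for all measurable sets I₁,…,I_{n−2} ⊆ ℝ of finite Lebesgue measure, all nonnegative measurable functions f_{n−1}, fₙ on ℝ, and every λ > 0, λ · |{x ∈ ℝ : T(χ_{I₁},…,χ_{I_{n−2}}, f_{n−1}, fₙ)(x) > λ}|^{1/n} ≤ C (∏_{j=1}^{n−2} |I_j|^{(n−1)/n}) ‖f_{n−1}‖_1 ‖fₙ‖_∞; that is, T is of restricted weak type at the point K = ((n−1)/n,…,(n−1)/n, 1, 0; 1/n). -/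
open MeasureTheory ENNReal

/-! Testing `T` on sets `A` reduces the weak type bound to `∫_A T ≤ C (∏ |I_j| |A|)^{(n-1)/n}` times
the norms of the two functions. Substituting `x = t + σ_{n-1}` and integrating first in `σ`, this
becomes the same bound for the surface measure of the set where `σ_{n-1} - σ_j ∈ E_j` for
`j ≤ n - 2` and `σ_{n-1} ∈ E_{n-1}`. The first `n - 1` coordinates of a point of the sphere are
distributed with density proportional to `(1 - |y|²)^{-1/2}`, so this is the integral of that weight
over a box in linear coordinates. Along a line the weight has integral `O(1)` over any set, and
`O(|E_i|^{1/2})` over `E_i` restricted to the region where the `i`-th direction is transversal to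
the spheres centred at `0`. Hence on that region the integral is at most a constant times
`∏_{j ≠ k} |E_j|` for each `k`, and at most a constant times `|E_i|^{1/2} ∏_{j ≠ i} |E_j|`. A
geometric mean of these bounds is `(∏ |E_j|)^{(n-1)/n}`, and the regions cover space. -/

/-- The weight `r ↦ r^{-1/2}` on `(0, ∞)`, extended by `0` to `r ≤ 0`. -/
noncomputable def invSqrt (r : ℝ) : ℝ≥0∞ := ENNReal.ofReal (√r)⁻¹

section InvSqrt

@[fun_prop]
lemma measurable_invSqrt : Measurable invSqrt := by unfold invSqrt; fun_prop

lemma invSqrt_of_nonpos {r : ℝ} (hr : r ≤ 0) : invSqrt r = 0 := by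
  simp [invSqrt, Real.sqrt_eq_zero_of_nonpos hr]

lemma invSqrt_ne_top (r : ℝ) : invSqrt r ≠ ∞ := ENNReal.ofReal_ne_top

lemma invSqrt_mul {a : ℝ} (ha : 0 ≤ a) (b : ℝ) : invSqrt (a * b) = invSqrt a * invSqrt b := by
  rw [invSqrt, invSqrt, invSqrt, Real.sqrt_mul ha, mul_inv, ENNReal.ofReal_mul (by positivity)]

lemma invSqrt_le_invSqrt {a b : ℝ} (ha : 0 < a) (hab : a ≤ b) : invSqrt b ≤ invSqrt a := by
  unfold invSqrt
  gcongr

lemma ofReal_mul_invSqrt_sq {r : ℝ} (hr : 0 < r) : ENNReal.ofReal r * invSqrt (r ^ 2) = 1 := by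
  rw [invSqrt, Real.sqrt_sq hr.le, ← ENNReal.ofReal_mul hr.le, mul_inv_cancel₀ hr.ne',
    ENNReal.ofReal_one]

lemma invSqrt_mul_ofReal_self (r : ℝ) : invSqrt r * ENNReal.ofReal r = ENNReal.ofReal (√r) := by
  rw [invSqrt, ← ENNReal.ofReal_mul (by positivity), inv_mul_eq_div, Real.div_sqrt]

lemma lintegral_comp_abs (f : ℝ → ℝ≥0∞) :
    ∫⁻ x, f |x| = 2 * ∫⁻ x in Set.Ioi 0, f x := by
  have hpos : ∫⁻ x in Set.Ioi (0 : ℝ), f |x| = ∫⁻ x in Set.Ioi 0, f x :=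
    setLIntegral_congr_fun measurableSet_Ioi fun x hx => by rw [abs_of_pos hx]
  have hneg : ∫⁻ x in Set.Iio (0 : ℝ), f |x| = ∫⁻ x in Set.Ioi 0, f |x| := by
    simpa using (Measure.measurePreserving_neg (volume : Measure ℝ)).setLIntegral_comp_preimage_emb
      (MeasurableEquiv.neg ℝ).measurableEmbedding (fun x => f |x|) (Set.Ioi 0)
  rw [← lintegral_add_compl _ measurableSet_Ioi, Set.compl_Ioi,
    restrict_Iio_eq_restrict_Iic.symm, hneg, hpos, two_mul]

lemma lintegral_invSqrt_Ioc {r : ℝ} (hr : 0 ≤ r) :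
    ∫⁻ s in Set.Ioc 0 r, invSqrt s = ENNReal.ofReal (2 * √r) := by
  have hint : IntervalIntegrable (fun s : ℝ => s ^ (-(1 / 2) : ℝ)) volume 0 r :=
    intervalIntegral.intervalIntegrable_rpow' (by norm_num)
  calc ∫⁻ s in Set.Ioc 0 r, invSqrt s
      = ∫⁻ s in Set.Ioc 0 r, ENNReal.ofReal (s ^ (-(1 / 2) : ℝ)) :=
        setLIntegral_congr_fun measurableSet_Ioc fun s hs => by
          rw [invSqrt, Real.sqrt_eq_rpow, Real.rpow_neg hs.1.le]
    _ = ENNReal.ofReal (∫ s in 0..r, s ^ (-(1 / 2) : ℝ)) := by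
        rw [intervalIntegral.integral_of_le hr, ofReal_integral_eq_lintegral_ofReal
          ((intervalIntegrable_iff_integrableOn_Ioc_of_le hr).1 hint)]
        exact ae_restrict_of_forall_mem measurableSet_Ioc fun s hs => Real.rpow_nonneg hs.1.le _
    _ = ENNReal.ofReal (2 * √r) := by
        rw [integral_rpow (Or.inl (by norm_num)), Real.sqrt_eq_rpow]
        norm_num [div_eq_mul_inv, mul_comm]

lemma setLIntegral_invSqrt_abs_sub_le_add (A : Set ℝ) (b : ℝ) {r : ℝ} (hr : 0 < r) :
    ∫⁻ s in A, invSqrt |s - b| ≤ ENNReal.ofReal (4 * √r) + invSqrt r * volume A := by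
  have hsplit (s : ℝ) : invSqrt |s - b| ≤ (Set.Iic r).indicator invSqrt |s - b| + invSqrt r := by
    rcases le_or_gt |s - b| r with hs | hs
    · rw [Set.indicator_of_mem (Set.mem_Iic.2 hs)]
      exact le_self_add
    · exact (invSqrt_le_invSqrt hr hs.le).trans le_add_self
  calc ∫⁻ s in A, invSqrt |s - b|
      ≤ ∫⁻ s in A, (Set.Iic r).indicator invSqrt |s - b| + invSqrt r := lintegral_mono hsplit
    _ = (∫⁻ s in A, (Set.Iic r).indicator invSqrt |s - b|) + invSqrt r * volume A := by
        rw [lintegral_add_right _ measurable_const, setLIntegral_const]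
    _ ≤ (∫⁻ s, (Set.Iic r).indicator invSqrt |s - b|) + invSqrt r * volume A := by
        gcongr
        exact Measure.restrict_le_self
    _ = ENNReal.ofReal (4 * √r) + invSqrt r * volume A := by
        rw [lintegral_sub_right_eq_self (fun s => (Set.Iic r).indicator invSqrt |s|),
          lintegral_comp_abs, setLIntegral_indicator measurableSet_Iic, Set.Iic_inter_Ioi,
          lintegral_invSqrt_Ioc hr.le, ← ENNReal.ofReal_ofNat 2,
          ← ENNReal.ofReal_mul zero_le_two]
        ring_nf

lemma setLIntegral_invSqrt_abs_sub_le (A : Set ℝ) (b : ℝ) :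
    ∫⁻ s in A, invSqrt |s - b| ≤ 5 * volume A ^ (1 / 2 : ℝ) := by
  rcases eq_or_ne (volume A) ∞ with hA | hA
  · simp [hA]
  rcases eq_or_ne (volume A) 0 with hA0 | hA0
  · rw [setLIntegral_measure_zero _ _ hA0]
    exact zero_le
  -- The two terms of the bound balance at the length scale `|A|`.
  have hr : 0 < (volume A).toReal := ENNReal.toReal_pos hA0 hA
  refine (setLIntegral_invSqrt_abs_sub_le_add A b hr).trans_eq ?_
  rw [← ENNReal.ofReal_toReal hA, ENNReal.toReal_ofReal hr.le, invSqrt_mul_ofReal_self,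
    ENNReal.ofReal_mul zero_le_four, ENNReal.ofReal_ofNat, ENNReal.ofReal_rpow_of_pos hr,
    Real.sqrt_eq_rpow]
  ring

lemma invSqrt_sub_sq_le {c : ℝ} (hc : 0 < c) (b s : ℝ) :
    invSqrt (c ^ 2 - (s - b) ^ 2) ≤
      invSqrt c * (invSqrt |s - (b + c)| + invSqrt |s - (b - c)|) := by
  rcases le_or_gt (c ^ 2 - (s - b) ^ 2) 0 with h | h
  · exact (invSqrt_of_nonpos h).trans_le zero_le
  obtain ⟨h₁, h₂⟩ := abs_lt.1 (abs_lt_of_sq_lt_sq (sub_pos.1 h) hc.le)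
  rw [abs_sub_comm, abs_of_pos (show 0 < b + c - s by linarith),
    abs_of_pos (show 0 < s - (b - c) by linarith),
    show c ^ 2 - (s - b) ^ 2 = (b + c - s) * (s - (b - c)) by ring,
    invSqrt_mul (by linarith), mul_add]
  rcases le_total s b with hs | hs
  · refine le_add_left ?_
    gcongr
    exact invSqrt_le_invSqrt hc (by linarith)
  · rw [mul_comm (invSqrt c)]
    refine le_add_right ?_
    gcongr
    exact invSqrt_le_invSqrt hc (by linarith)

lemma setLIntegral_invSqrt_sub_sq_le (A : Set ℝ) {c : ℝ} (hc : 0 < c) (b : ℝ) :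
    ∫⁻ s in A, invSqrt (c ^ 2 - (s - b) ^ 2) ≤
      10 * invSqrt c * volume A ^ (1 / 2 : ℝ) :=
  calc ∫⁻ s in A, invSqrt (c ^ 2 - (s - b) ^ 2)
      ≤ ∫⁻ s in A, invSqrt c * (invSqrt |s - (b + c)| + invSqrt |s - (b - c)|) :=
        lintegral_mono fun s => invSqrt_sub_sq_le hc b s
    _ = invSqrt c * ((∫⁻ s in A, invSqrt |s - (b + c)|) + ∫⁻ s in A, invSqrt |s - (b - c)|) := by
        rw [lintegral_const_mul _ (by fun_prop), lintegral_add_left (by fun_prop)]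
    _ ≤ invSqrt c * (5 * volume A ^ (1 / 2 : ℝ) + 5 * volume A ^ (1 / 2 : ℝ)) := by
        gcongr <;> exact setLIntegral_invSqrt_abs_sub_le _ _
    _ = 10 * invSqrt c * volume A ^ (1 / 2 : ℝ) := by ring

lemma lintegral_invSqrt_sub_sq_le (e b : ℝ) :
    ∫⁻ s, invSqrt (e - (s - b) ^ 2) ≤ 20 := by
  rcases le_or_gt e 0 with he | he
  · simp only [invSqrt_of_nonpos (sub_nonpos.2 (he.trans (sq_nonneg _))), lintegral_zero, zero_le]
  obtain ⟨c, hc, rfl⟩ : ∃ c : ℝ, 0 < c ∧ c ^ 2 = e := ⟨√e, Real.sqrt_pos.2 he, Real.sq_sqrt he.le⟩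
  have hsupp : Function.support (fun s => invSqrt (c ^ 2 - (s - b) ^ 2)) ⊆
      Set.Ioo (b - c) (b + c) := fun s hs => by
    rw [← Real.ball_eq_Ioo, Metric.mem_ball, Real.dist_eq]
    contrapose! hs
    exact Function.notMem_support.2
      (invSqrt_of_nonpos (sub_nonpos.2 (sq_le_sq.2 (by rwa [abs_of_pos hc]))))
  calc ∫⁻ s, invSqrt (c ^ 2 - (s - b) ^ 2)
      = ∫⁻ s in Set.Ioo (b - c) (b + c), invSqrt (c ^ 2 - (s - b) ^ 2) := by
        rw [← lintegral_indicator measurableSet_Ioo, Set.indicator_eq_self.2 hsupp]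
    _ ≤ 10 * invSqrt c * volume (Set.Ioo (b - c) (b + c)) ^ (1 / 2 : ℝ) :=
        setLIntegral_invSqrt_sub_sq_le _ hc b
    _ ≤ 10 * invSqrt c * ENNReal.ofReal (2 ^ 2 * c) ^ (1 / 2 : ℝ) := by
        rw [Real.volume_Ioo]
        gcongr
        linarith
    _ = 20 := by
        rw [ENNReal.ofReal_rpow_of_pos (by positivity), ← Real.sqrt_eq_rpow, invSqrt, mul_assoc,
          ← ENNReal.ofReal_mul (by positivity), Real.sqrt_mul (by positivity),
          Real.sqrt_sq zero_le_two, mul_left_comm, inv_mul_cancel₀ (Real.sqrt_pos.2 hc).ne']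
        norm_num

end InvSqrt

section Line

variable {E : Type*} [NormedAddCommGroup E] [InnerProductSpace ℝ E]

lemma exists_completeSquare_one_sub_norm_sq (p : E) {q : E} (hq : q ≠ 0) :
    ∃ e b : ℝ, ∀ s : ℝ, 1 - ‖p + s • q‖ ^ 2 = ‖q‖ ^ 2 * (e - (s - b) ^ 2) ∧
      inner ℝ (p + s • q) q = ‖q‖ ^ 2 * (s - b) := by
  have hq' : ‖q‖ ≠ 0 := norm_ne_zero_iff.2 hq
  refine ⟨(1 - ‖p‖ ^ 2 + inner ℝ p q ^ 2 / ‖q‖ ^ 2) / ‖q‖ ^ 2, -inner ℝ p q / ‖q‖ ^ 2,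
    fun s => ⟨?_, ?_⟩⟩
  · rw [norm_add_sq_real, inner_smul_right, norm_smul, mul_pow, Real.norm_eq_abs, sq_abs]
    field_simp
    ring
  · rw [inner_add_left, real_inner_smul_left, real_inner_self_eq_norm_sq]
    field_simp
    ring

lemma lintegral_invSqrt_one_sub_norm_sq_line_le (p : E) {q : E} (hq : q ≠ 0) :
    ∫⁻ s : ℝ, invSqrt (1 - ‖p + s • q‖ ^ 2) ≤ 20 * invSqrt (‖q‖ ^ 2) := by
  obtain ⟨e, b, h⟩ := exists_completeSquare_one_sub_norm_sq p hq
  simp_rw [(h _).1, invSqrt_mul (sq_nonneg ‖q‖)]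
  rw [lintegral_const_mul _ (by fun_prop), mul_comm]
  gcongr
  exact lintegral_invSqrt_sub_sq_le e b

/-- The points at which the direction `q` makes a definite angle with the sphere about the origin
through that point: there the cosine of the angle between `z` and `q` is bounded below, the bound
being encoded by `N` without normalising `q`. -/
def transversalRegion (q : E) (N : ℝ) : Set E := {z | ‖z‖ ^ 2 ≤ N * inner ℝ z q ^ 2}

lemma measurableSet_transversalRegion [MeasurableSpace E] [BorelSpace E] (q : E) (N : ℝ) :
    MeasurableSet (transversalRegion q N) :=
  (isClosed_le (by fun_prop) (by fun_prop)).measurableSet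

-- A line that meets the unit ball transversally has a chord of length bounded below, so that the
-- two singularities of the weight at its ends stay apart.
lemma exists_setLIntegral_transversalRegion_line_le {q : E} (hq : q ≠ 0) {N : ℝ} (hN : 0 ≤ N) :
    ∃ C : ℝ≥0∞, C ≠ ∞ ∧ ∀ (A : Set ℝ) (p : E),
      ∫⁻ s in A, (transversalRegion q N).indicator (fun z => invSqrt (1 - ‖z‖ ^ 2)) (p + s • q) ≤
        C * volume A ^ (1 / 2 : ℝ) := by
  have ha : 0 < ‖q‖ ^ 2 := by positivity
  set a := ‖q‖ ^ 2
  set c₀ := √(a + N * a ^ 2)⁻¹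
  have hc₀ : 0 < c₀ := by positivity
  refine ⟨invSqrt a * (10 * invSqrt c₀), by simp [ENNReal.mul_eq_top, invSqrt_ne_top],
    fun A p => ?_⟩
  obtain ⟨e, b, h⟩ := exists_completeSquare_one_sub_norm_sq p hq
  by_cases hmeet : ∃ s : ℝ, p + s • q ∈ transversalRegion q N ∧ 0 < 1 - ‖p + s • q‖ ^ 2
  · obtain ⟨s, hs, hs_ball⟩ := hmeet
    have hle : c₀ ≤ √e := by
      rw [(h s).1] at hs_ball
      have hs_chord : 0 < e - (s - b) ^ 2 := pos_of_mul_pos_right hs_ball ha.le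
      have hs' : ‖p + s • q‖ ^ 2 ≤ N * (a * (s - b)) ^ 2 := (h s).2 ▸ hs
      refine Real.sqrt_le_sqrt ((inv_le_iff_one_le_mul₀ (by positivity)).2 ?_)
      nlinarith [(h s).1, mul_nonneg (mul_nonneg hN (sq_nonneg a)) hs_chord.le,
        mul_nonneg ha.le (sq_nonneg (s - b))]
    have he : √e ^ 2 = e := Real.sq_sqrt (Real.sqrt_pos.1 (hc₀.trans_le hle)).le
    calc ∫⁻ s in A, (transversalRegion q N).indicator (fun z => invSqrt (1 - ‖z‖ ^ 2)) (p + s • q)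
        ≤ ∫⁻ s in A, invSqrt a * invSqrt (√e ^ 2 - (s - b) ^ 2) := by
          refine lintegral_mono fun s => (Set.indicator_le_self _ _ _).trans_eq ?_
          rw [(h s).1, invSqrt_mul ha.le, he]
      _ = invSqrt a * ∫⁻ s in A, invSqrt (√e ^ 2 - (s - b) ^ 2) :=
          lintegral_const_mul _ (by fun_prop)
      _ ≤ invSqrt a * (10 * invSqrt √e * volume A ^ (1 / 2 : ℝ)) := by
          gcongr
          exact setLIntegral_invSqrt_sub_sq_le A (hc₀.trans_le hle) b
      _ ≤ invSqrt a * (10 * invSqrt c₀) * volume A ^ (1 / 2 : ℝ) := by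
          rw [← mul_assoc]
          gcongr
          exact invSqrt_le_invSqrt hc₀ hle
  · have hzero (s : ℝ) :
        (transversalRegion q N).indicator (fun z => invSqrt (1 - ‖z‖ ^ 2)) (p + s • q) = 0 :=
      Set.indicator_apply_eq_zero.2 fun hs =>
        invSqrt_of_nonpos (not_lt.1 fun hpos => hmeet ⟨s, hs, hpos⟩)
    simp only [hzero, lintegral_zero, zero_le]

end Line

lemma exists_norm_sq_le_mul_inner_sq {ι E : Type*} [Finite ι] [Nonempty ι]
    [NormedAddCommGroup E] [InnerProductSpace ℝ E] (b : Module.Basis ι ℝ E) :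
    ∃ N : ℝ, 0 ≤ N ∧ ∀ z : E, ∃ i, ‖z‖ ^ 2 ≤ N * inner ℝ z (b i) ^ 2 := by
  have := Fintype.ofFinite ι
  have := b.finiteDimensional_of_finite
  let D : E →ₗ[ℝ] ι → ℝ := LinearMap.pi fun i => innerₗ E (b i)
  have hD : LinearMap.ker D = ⊥ := LinearMap.ker_eq_bot'.2 fun z hz =>
    InnerProductSpace.ext_inner_left_basis b fun i => by simpa [D] using congrFun hz i
  obtain ⟨K, -, hK⟩ := D.exists_antilipschitzWith hD
  refine ⟨K ^ 2, sq_nonneg _, fun z => ?_⟩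
  obtain ⟨i, hi⟩ := Finite.exists_max fun i => ‖D z i‖
  refine ⟨i, ?_⟩
  have hz : ‖z‖ ≤ K * ‖D z i‖ :=
    (ZeroHomClass.bound_of_antilipschitz D hK z).trans <| by
      gcongr
      exact (pi_norm_le_iff_of_nonempty _).2 hi
  calc ‖z‖ ^ 2 ≤ (K * ‖D z i‖) ^ 2 := by gcongr
    _ = K ^ 2 * inner ℝ z (b i) ^ 2 := by
        rw [mul_pow, Real.norm_eq_abs, sq_abs]
        simp [D, real_inner_comm]

lemma lintegral_pi_le_of_lintegral_update_le {ι : Type*} [Fintype ι] [DecidableEq ι]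
    {X : ι → Type*} [∀ i, MeasurableSpace (X i)] (μ : ∀ i, Measure (X i)) [∀ i, SigmaFinite (μ i)]
    {f : (∀ i, X i) → ℝ≥0∞} (hf : Measurable f) (i : ι) {K : ℝ≥0∞}
    (hK : ∀ v, ∫⁻ s, f (Function.update v i s) ∂μ i ≤ K) :
    ∫⁻ v, f v ∂Measure.pi μ ≤ K * ∏ k ∈ Finset.univ.erase i, μ k Set.univ := by
  cases isEmpty_or_nonempty (∀ i, X i)
  · simp [lintegral_of_isEmpty]
  obtain ⟨v⟩ := ‹Nonempty (∀ i, X i)›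
  calc ∫⁻ v, f v ∂Measure.pi μ
      = (∫⋯∫⁻_(Finset.univ.erase i), (fun v => ∫⁻ s, f (Function.update v i s) ∂μ i) ∂μ) v := by
        rw [lintegral_eq_lmarginal_univ v, lmarginal_erase' f hf (Finset.mem_univ i)]
    _ ≤ (∫⋯∫⁻_(Finset.univ.erase i), (fun _ => K) ∂μ) v := lmarginal_mono hK v
    _ = K * ∏ k ∈ Finset.univ.erase i, μ k Set.univ := by
        rw [lmarginal, lintegral_const, Measure.pi_univ,
          Finset.prod_coe_sort _ fun k => μ k Set.univ]

lemma prod_prod_erase {ι M : Type*} [Fintype ι] [DecidableEq ι] [CommMonoid M] (e : ι → M) :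
    ∏ j, ∏ k ∈ Finset.univ.erase j, e k = (∏ k, e k) ^ (Fintype.card ι - 1) := by
  rw [Finset.prod_comm' (t' := Finset.univ) (s' := fun k => Finset.univ.erase k)
    (by simp [eq_comm])]
  simp [Finset.prod_pow]

lemma le_mul_prod_rpow_of_le_mul_prod_erase {ι : Type*} [Fintype ι] [DecidableEq ι] {e : ι → ℝ≥0∞}
    {X K : ℝ≥0∞} (h : ∀ j, X ≤ K * ∏ k ∈ Finset.univ.erase j, e k) {i : ι}
    (hi : X ≤ K * (e i ^ (1 / 2 : ℝ) * ∏ k ∈ Finset.univ.erase i, e k)) :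
    X ≤ K * (∏ k, e k) ^ (Fintype.card ι / (Fintype.card ι + 1) : ℝ) := by
  obtain ⟨m, hm⟩ := Nat.exists_eq_add_one.2 (Fintype.card_pos_iff.2 ⟨i⟩)
  rw [hm]
  have hsq : (e i ^ (1 / 2 : ℝ)) ^ 2 = e i := by
    rw [← ENNReal.rpow_natCast, ← ENNReal.rpow_mul]
    norm_num
  have hpow : X ^ (m + 1 + 1) ≤ K ^ (m + 1 + 1) * (∏ k, e k) ^ (m + 1) :=
    calc X ^ (m + 1 + 1) = X ^ 2 * ∏ _j ∈ Finset.univ.erase i, X := by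
          rw [Finset.prod_const, Finset.card_erase_of_mem (Finset.mem_univ i), Finset.card_univ,
            hm, Nat.add_sub_cancel, ← pow_add, add_comm 2]
      _ ≤ (K * (e i ^ (1 / 2 : ℝ) * ∏ k ∈ Finset.univ.erase i, e k)) ^ 2 *
          ∏ j ∈ Finset.univ.erase i, (K * ∏ k ∈ Finset.univ.erase j, e k) := by
          gcongr with j
          exact h j
      _ = K * (e i * ∏ k ∈ Finset.univ.erase i, e k) *
          ∏ j, (K * ∏ k ∈ Finset.univ.erase j, e k) := by
          rw [mul_pow, mul_pow, hsq, ← Finset.mul_prod_erase Finset.univ _ (Finset.mem_univ i)]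
          ring
      _ = K ^ (m + 1 + 1) * (∏ k, e k) ^ (m + 1) := by
          rw [Finset.mul_prod_erase _ _ (Finset.mem_univ i), Finset.prod_mul_distrib,
            Finset.prod_const, Finset.card_univ, prod_prod_erase, hm,
            Nat.add_sub_cancel]
          ring
  have hroot := ENNReal.rpow_le_rpow hpow (z := ((m + 1 + 1 : ℕ) : ℝ)⁻¹) (by positivity)
  rwa [ENNReal.mul_rpow_of_nonneg _ _ (by positivity),
    ENNReal.pow_rpow_inv_natCast (Nat.succ_ne_zero _),
    ENNReal.pow_rpow_inv_natCast (Nat.succ_ne_zero _), ← ENNReal.rpow_natCast, ← ENNReal.rpow_mul,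
    Nat.cast_succ (m + 1), ← div_eq_mul_inv] at hroot

section Box

variable {ι E : Type*} [Fintype ι] [NormedAddCommGroup E] [MeasurableSpace E] [BorelSpace E]

section NormedSpace

variable [NormedSpace ℝ E]

lemma exists_setLIntegral_preimage_eq_mul (μ : Measure E) [μ.IsAddHaarMeasure]
    (ψ : E ≃ₗ[ℝ] (ι → ℝ)) :
    ∃ c : ℝ≥0∞, c ≠ ∞ ∧ ∀ (B : Set (ι → ℝ)) (F : E → ℝ≥0∞),
      ∫⁻ y in ψ ⁻¹' B, F y ∂μ = c * ∫⁻ v in B, F (ψ.symm v) := by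
  have := ψ.symm.finiteDimensional
  let e : E ≃ᵐ (ι → ℝ) := ψ.toContinuousLinearEquiv.toHomeomorph.toMeasurableEquiv
  have : (μ.map e).IsAddHaarMeasure := ψ.toContinuousLinearEquiv.isAddHaarMeasure_map μ
  have hmap := Measure.isAddLeftInvariant_eq_smul (μ.map e) volume
  refine ⟨Measure.addHaarScalarFactor (μ.map e) volume, ENNReal.coe_ne_top, fun B F => ?_⟩
  calc ∫⁻ y in ψ ⁻¹' B, F y ∂μ = ∫⁻ v in B, F (ψ.symm v) ∂μ.map e := by
        rw [e.restrict_map, lintegral_map_equiv]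
        simp [e]
    _ = Measure.addHaarScalarFactor (μ.map e) volume * ∫⁻ v in B, F (ψ.symm v) := by
        conv_lhs => rw [hmap]
        exact setLIntegral_smul_measure _ _ _

lemma setLIntegral_pi_le_of_setLIntegral_line_le [DecidableEq ι] (ψ : E ≃ₗ[ℝ] (ι → ℝ))
    {F : E → ℝ≥0∞} (hF : Measurable F) (A : ι → Set ℝ) (i : ι) {K : ℝ≥0∞}
    (hK : ∀ p, ∫⁻ s in A i, F (p + s • ψ.symm (Pi.single i 1)) ≤ K) :
    ∫⁻ v in Set.univ.pi A, F (ψ.symm v) ≤ K * ∏ k ∈ Finset.univ.erase i, volume (A k) := by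
  have := ψ.symm.finiteDimensional
  have hline (v : ι → ℝ) (s : ℝ) : ψ.symm (Function.update v i s) =
      ψ.symm (Function.update v i 0) + s • ψ.symm (Pi.single i 1) := by
    rw [← map_smul, ← map_add, ← Pi.single_smul', smul_eq_mul, mul_one]
    congr 1
    ext k
    rcases eq_or_ne k i with rfl | hk <;> simp [*]
  have hFψ : Measurable fun v => F (ψ.symm v) :=
    hF.comp ψ.symm.toContinuousLinearEquiv.continuous.measurable
  have hbound := lintegral_pi_le_of_lintegral_update_le (fun k => volume.restrict (A k)) hFψ i
    fun v => (lintegral_congr fun s => congrArg F (hline v s)).trans_le (hK _)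
  rw [volume_pi, Measure.restrict_pi_pi]
  simpa only [Measure.restrict_apply_univ] using hbound

end NormedSpace

variable [InnerProductSpace ℝ E]

lemma exists_setLIntegral_pi_transversalRegion_le [DecidableEq ι] (ψ : E ≃ₗ[ℝ] (ι → ℝ)) (i : ι)
    {N : ℝ} (hN : 0 ≤ N) :
    ∃ C : ℝ≥0∞, C ≠ ∞ ∧ ∀ A : ι → Set ℝ,
      ∫⁻ v in Set.univ.pi A, (transversalRegion (ψ.symm (Pi.single i 1)) N).indicator
        (fun z => invSqrt (1 - ‖z‖ ^ 2)) (ψ.symm v) ≤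
        C * (∏ k, volume (A k)) ^ (Fintype.card ι / (Fintype.card ι + 1) : ℝ) := by
  set q : ι → E := fun k => ψ.symm (Pi.single k 1)
  have hq (k : ι) : q k ≠ 0 := by simp [q]
  obtain ⟨C₁, hC₁, h₁⟩ := exists_setLIntegral_transversalRegion_line_le (hq i) hN
  set F : E → ℝ≥0∞ := (transversalRegion (q i) N).indicator fun z => invSqrt (1 - ‖z‖ ^ 2)
  have hF : Measurable F :=
    Measurable.indicator (by fun_prop) (measurableSet_transversalRegion _ _)
  set C₀ : ℝ≥0∞ := ∑ k, 20 * invSqrt (‖q k‖ ^ 2)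
  have hC₀ : C₀ ≠ ∞ :=
    ENNReal.sum_ne_top.2 fun k _ => ENNReal.mul_ne_top (by simp) (invSqrt_ne_top _)
  refine ⟨C₀ + C₁, ENNReal.add_ne_top.2 ⟨hC₀, hC₁⟩, fun A =>
    le_mul_prod_rpow_of_le_mul_prod_erase (i := i) (fun j => ?_) ?_⟩
  · refine (setLIntegral_pi_le_of_setLIntegral_line_le ψ hF A j fun p => ?_).trans
      (mul_le_mul_left (le_self_add (a := C₀)) _)
    calc ∫⁻ s in A j, F (p + s • q j)
        ≤ ∫⁻ s, invSqrt (1 - ‖p + s • q j‖ ^ 2) :=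
          (setLIntegral_le_lintegral _ _).trans
            (lintegral_mono fun s => Set.indicator_le_self _ _ _)
      _ ≤ 20 * invSqrt (‖q j‖ ^ 2) := lintegral_invSqrt_one_sub_norm_sq_line_le p (hq j)
      _ ≤ C₀ := Finset.single_le_sum_of_canonicallyOrdered (f := fun k => 20 * invSqrt (‖q k‖ ^ 2))
          (Finset.mem_univ j)
  · rw [← mul_assoc]
    exact setLIntegral_pi_le_of_setLIntegral_line_le ψ hF A i fun p =>
      (h₁ (A i) p).trans (mul_le_mul_left le_add_self _)

lemma exists_setLIntegral_preimage_pi_invSqrt_le [Nonempty ι] (μ : Measure E) [μ.IsAddHaarMeasure]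
    (ψ : E ≃ₗ[ℝ] (ι → ℝ)) :
    ∃ C : ℝ≥0∞, C ≠ ∞ ∧ ∀ A : ι → Set ℝ,
      ∫⁻ y in ψ ⁻¹' Set.univ.pi A, invSqrt (1 - ‖y‖ ^ 2) ∂μ ≤
        C * (∏ k, volume (A k)) ^ (Fintype.card ι / (Fintype.card ι + 1) : ℝ) := by
  classical
  obtain ⟨c, hc, hψ⟩ := exists_setLIntegral_preimage_eq_mul μ ψ
  obtain ⟨N, hN, hcover⟩ := exists_norm_sq_le_mul_inner_sq (Module.Basis.ofEquivFun ψ)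
  choose C hC hbound using fun i => exists_setLIntegral_pi_transversalRegion_le ψ i hN
  have := ψ.symm.finiteDimensional
  set w : E → ℝ≥0∞ := fun z => invSqrt (1 - ‖z‖ ^ 2)
  set R : ι → Set E := fun i => transversalRegion (ψ.symm (Pi.single i 1)) N
  have hw (z : E) : w z ≤ ∑ i, (R i).indicator w z := by
    obtain ⟨i, hi⟩ := hcover z
    rw [Module.Basis.coe_ofEquivFun] at hi
    calc w z = (R i).indicator w z := (Set.indicator_of_mem (show z ∈ R i from hi) w).symm
      _ ≤ ∑ i, (R i).indicator w z :=
        Finset.single_le_sum_of_canonicallyOrdered (f := fun i => (R i).indicator w z)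
          (Finset.mem_univ i)
  refine ⟨c * ∑ i, C i, ENNReal.mul_ne_top hc (ENNReal.sum_ne_top.2 fun i _ => hC i),
    fun A => ?_⟩
  calc ∫⁻ y in ψ ⁻¹' Set.univ.pi A, w y ∂μ
      = c * ∫⁻ v in Set.univ.pi A, w (ψ.symm v) := hψ _ _
    _ ≤ c * ∫⁻ v in Set.univ.pi A, ∑ i, (R i).indicator w (ψ.symm v) := by
        gcongr
        exact hw _
    _ = c * ∑ i, ∫⁻ v in Set.univ.pi A, (R i).indicator w (ψ.symm v) := by
        rw [lintegral_finsetSum]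
        exact fun i _ => (Measurable.indicator (by fun_prop)
          (measurableSet_transversalRegion _ _)).comp
            ψ.symm.toContinuousLinearEquiv.continuous.measurable
    _ ≤ c * ∑ i, C i * (∏ k, volume (A k)) ^ (Fintype.card ι / (Fintype.card ι + 1) : ℝ) := by
        gcongr with i
        exact hbound i A
    _ = c * (∑ i, C i) * (∏ k, volume (A k)) ^ (Fintype.card ι / (Fintype.card ι + 1) : ℝ) := by
        rw [← Finset.sum_mul, mul_assoc]

end Box

lemma image_sqrt_sq_sub_Ioi {c : ℝ} (hc : 0 ≤ c) :
    (fun r => √(r ^ 2 - c)) '' Set.Ioi √c = Set.Ioi 0 := by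
  ext t
  refine ⟨?_, fun ht => ⟨√(t ^ 2 + c), Real.sqrt_lt_sqrt hc ?_, ?_⟩⟩
  · rintro ⟨r, hr, rfl⟩
    exact Real.sqrt_pos.2 (sub_pos.2 (Real.lt_sq_of_sqrt_lt hr))
  · linarith [pow_pos (Set.mem_Ioi.1 ht) 2]
  · dsimp only
    rw [Real.sq_sqrt (by positivity), add_sub_cancel_right, Real.sqrt_sq (Set.mem_Ioi.1 ht).le]

lemma setLIntegral_Ioi_comp_sqrt_sq_add {c : ℝ} (hc : 0 ≤ c) (F : ℝ → ℝ≥0∞) :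
    ∫⁻ t in Set.Ioi 0, F √(t ^ 2 + c) =
      ∫⁻ r in Set.Ioi 0, ENNReal.ofReal r * invSqrt (r ^ 2 - c) * F r := by
  have hpos {r : ℝ} (hr : r ∈ Set.Ioi √c) : 0 < r ^ 2 - c := sub_pos.2 (Real.lt_sq_of_sqrt_lt hr)
  have hderiv : ∀ r ∈ Set.Ioi √c,
      HasDerivWithinAt (fun r => √(r ^ 2 - c)) (r / √(r ^ 2 - c)) (Set.Ioi √c) r := fun r hr => by
    refine (((hasDerivAt_pow 2 r).sub_const c).sqrt (hpos hr).ne').hasDerivWithinAt.congr_deriv ?_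
    rw [Nat.cast_ofNat, pow_one, mul_div_mul_left _ _ two_ne_zero]
  have hinj : Set.InjOn (fun r => √(r ^ 2 - c)) (Set.Ioi √c) := fun r hr r' hr' h => by
    have := (Real.sqrt_inj (hpos hr).le (hpos hr').le).1 h
    exact (sq_eq_sq₀ ((Real.sqrt_nonneg c).trans_lt hr).le
      ((Real.sqrt_nonneg c).trans_lt hr').le).1 (sub_left_injective this)
  calc ∫⁻ t in Set.Ioi 0, F √(t ^ 2 + c)
      = ∫⁻ r in Set.Ioi √c, ENNReal.ofReal |r / √(r ^ 2 - c)| * F √(√(r ^ 2 - c) ^ 2 + c) := by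
        rw [← image_sqrt_sq_sub_Ioi hc,
          lintegral_image_eq_lintegral_abs_deriv_mul measurableSet_Ioi hderiv hinj]
    _ = ∫⁻ r in Set.Ioi √c, ENNReal.ofReal r * invSqrt (r ^ 2 - c) * F r := by
        refine setLIntegral_congr_fun measurableSet_Ioi fun r hr => ?_
        have hr₀ : 0 ≤ r := (Real.sqrt_nonneg c).trans hr.le
        rw [abs_of_nonneg (by positivity), div_eq_mul_inv, ENNReal.ofReal_mul hr₀, ← invSqrt,
          Real.sq_sqrt (hpos hr).le, sub_add_cancel, Real.sqrt_sq hr₀]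
    _ = ∫⁻ r in Set.Ioi 0, ENNReal.ofReal r * invSqrt (r ^ 2 - c) * F r := by
        rw [← Set.inter_eq_left.2 (Set.Ioi_subset_Ioi (Real.sqrt_nonneg c)),
          ← setLIntegral_indicator measurableSet_Ioi]
        refine setLIntegral_congr_fun measurableSet_Ioi fun r hr =>
          Set.indicator_apply_eq_self.2 fun hr' => ?_
        rw [invSqrt_of_nonpos (sub_nonpos.2 ((Real.le_sqrt' hr).1 (not_lt.1 hr'))), mul_zero,
          zero_mul]

section Cone

variable {E : Type*} [NormedAddCommGroup E]

/-- The intersection of the open unit ball of `ℝ × E` (with the Euclidean norm, which is written out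
because `‖·‖` on a product is the maximum norm) with the cone over the part of the unit sphere that
projects to `A ⊆ E`. -/
def truncatedCone [SMul ℝ E] (A : Set E) : Set (ℝ × E) :=
  {p | √(p.1 ^ 2 + ‖p.2‖ ^ 2) < 1 ∧ (√(p.1 ^ 2 + ‖p.2‖ ^ 2))⁻¹ • p.2 ∈ A}

variable [NormedSpace ℝ E] [MeasurableSpace E] [BorelSpace E] [FiniteDimensional ℝ E]

lemma measurableSet_truncatedCone {A : Set E} (hA : MeasurableSet A) :
    MeasurableSet (truncatedCone A) := by
  have hr : Measurable fun p : ℝ × E => √(p.1 ^ 2 + ‖p.2‖ ^ 2) := by fun_prop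
  exact (measurableSet_lt hr measurable_const).inter ((hr.inv.smul measurable_snd) hA)

lemma lintegral_comp_inv_smul (μ : Measure E) [μ.IsAddHaarMeasure] (f : E → ℝ≥0∞) {r : ℝ}
    (hr : 0 < r) :
    ∫⁻ z, f (r⁻¹ • z) ∂μ = ENNReal.ofReal (r ^ Module.finrank ℝ E) * ∫⁻ y, f y ∂μ := by
  let e : E ≃ᵐ E := (Homeomorph.smulOfNeZero r⁻¹ (inv_ne_zero hr.ne')).toMeasurableEquiv
  calc ∫⁻ z, f (r⁻¹ • z) ∂μ = ∫⁻ y, f y ∂μ.map (r⁻¹ • ·) := (lintegral_map_equiv f e).symm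
    _ = ENNReal.ofReal (r ^ Module.finrank ℝ E) * ∫⁻ y, f y ∂μ := by
        rw [Measure.map_addHaar_smul μ (inv_ne_zero hr.ne'), lintegral_smul_measure, inv_pow,
          inv_inv, abs_of_pos (by positivity), smul_eq_mul]

lemma mul_lintegral_invSqrt_sq_sub_mul (μ : Measure E) [μ.IsAddHaarMeasure] (f : E → ℝ≥0∞) {r : ℝ}
    (hr : 0 < r) :
    ENNReal.ofReal r * ∫⁻ z, invSqrt (r ^ 2 - ‖z‖ ^ 2) * f (r⁻¹ • z) ∂μ =
      ENNReal.ofReal (r ^ Module.finrank ℝ E) * ∫⁻ y, invSqrt (1 - ‖y‖ ^ 2) * f y ∂μ := by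
  have hscale (z : E) : r ^ 2 - ‖z‖ ^ 2 = r ^ 2 * (1 - ‖r⁻¹ • z‖ ^ 2) := by
    rw [norm_smul, Real.norm_of_nonneg (by positivity)]
    field_simp
  simp_rw [hscale, invSqrt_mul (sq_nonneg r), mul_assoc]
  rw [lintegral_const_mul' _ _ (invSqrt_ne_top _), ← mul_assoc, ofReal_mul_invSqrt_sq hr, one_mul,
    lintegral_comp_inv_smul μ (fun y => invSqrt (1 - ‖y‖ ^ 2) * f y) hr]

lemma volume_truncatedCone_slice {A : Set E} (hA : MeasurableSet A) (z : E) :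
    volume ((·, z) ⁻¹' truncatedCone A) = 2 * ∫⁻ r in Set.Ioo 0 1,
      ENNReal.ofReal r * (invSqrt (r ^ 2 - ‖z‖ ^ 2) * A.indicator 1 (r⁻¹ • z)) := by
  let S : Set ℝ := {r | r < 1 ∧ r⁻¹ • z ∈ A}
  have hslice : MeasurableSet ((·, z) ⁻¹' truncatedCone A) :=
    measurable_prodMk_right (measurableSet_truncatedCone hA)
  have hS (r : ℝ) : S.indicator (1 : ℝ → ℝ≥0∞) r =
      (Set.Iio 1).indicator (fun r => A.indicator 1 (r⁻¹ • z)) r := by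
    classical
    simp [S, Set.indicator_apply, ite_and]
  calc volume ((·, z) ⁻¹' truncatedCone A)
      = ∫⁻ t, S.indicator 1 √(|t| ^ 2 + ‖z‖ ^ 2) := by
        simp_rw [sq_abs]
        exact (lintegral_indicator_one hslice).symm
    _ = 2 * ∫⁻ r in Set.Ioi 0,
          ENNReal.ofReal r * invSqrt (r ^ 2 - ‖z‖ ^ 2) * S.indicator 1 r := by
        rw [lintegral_comp_abs fun t => S.indicator 1 √(t ^ 2 + ‖z‖ ^ 2),
          setLIntegral_Ioi_comp_sqrt_sq_add (sq_nonneg _)]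
    _ = 2 * ∫⁻ r in Set.Ioo 0 1,
          ENNReal.ofReal r * (invSqrt (r ^ 2 - ‖z‖ ^ 2) * A.indicator 1 (r⁻¹ • z)) := by
        rw [← Set.Iio_inter_Ioi, ← setLIntegral_indicator measurableSet_Iio]
        simp only [hS, mul_assoc, Set.indicator_mul_right]

lemma prod_truncatedCone_le (μ : Measure E) [μ.IsAddHaarMeasure] {A : Set E}
    (hA : MeasurableSet A) :
    ((volume : Measure ℝ).prod μ) (truncatedCone A) ≤ 2 * ∫⁻ y in A, invSqrt (1 - ‖y‖ ^ 2) ∂μ := by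
  have hmeas : Measurable fun p : E × ℝ => ENNReal.ofReal p.2 *
      (invSqrt (p.2 ^ 2 - ‖p.1‖ ^ 2) * A.indicator 1 (p.2⁻¹ • p.1)) := by
    have : Measurable (A.indicator (1 : E → ℝ≥0∞)) := measurable_one.indicator hA
    fun_prop
  calc ((volume : Measure ℝ).prod μ) (truncatedCone A)
      = 2 * ∫⁻ r in Set.Ioo 0 1, ∫⁻ z,
          ENNReal.ofReal r * (invSqrt (r ^ 2 - ‖z‖ ^ 2) * A.indicator 1 (r⁻¹ • z)) ∂μ := by
        rw [Measure.prod_apply_symm (measurableSet_truncatedCone hA)]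
        simp_rw [volume_truncatedCone_slice hA]
        rw [lintegral_const_mul' _ _ (by simp), lintegral_lintegral_swap hmeas.aemeasurable]
    _ ≤ 2 * ∫⁻ r in Set.Ioo (0 : ℝ) 1, ∫⁻ y in A, invSqrt (1 - ‖y‖ ^ 2) ∂μ := by
        gcongr 2 * ?_
        refine setLIntegral_mono' measurableSet_Ioo fun r hr => ?_
        rw [lintegral_const_mul' _ _ ENNReal.ofReal_ne_top,
          mul_lintegral_invSqrt_sq_sub_mul μ _ hr.1, ← lintegral_indicator hA]
        have hind (y : E) : invSqrt (1 - ‖y‖ ^ 2) * A.indicator 1 y =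
            A.indicator (fun y => invSqrt (1 - ‖y‖ ^ 2)) y := by
          simp [← Set.indicator_mul_right A fun y => invSqrt (1 - ‖y‖ ^ 2)]
        simp only [hind]
        exact mul_le_of_le_one_left' (ENNReal.ofReal_le_one.2 (pow_le_one₀ hr.1.le hr.2.le))
    _ = 2 * ∫⁻ y in A, invSqrt (1 - ‖y‖ ^ 2) ∂μ := by simp

end Cone

/-- The vector of the first `d` coordinates of a vector in `ℝ^{d+1}`. -/
noncomputable def euclideanInit {d : ℕ} (x : EuclideanSpace ℝ (Fin (d + 1))) :
    EuclideanSpace ℝ (Fin d) :=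
  WithLp.toLp 2 fun i => x i.castSucc

@[fun_prop]
lemma measurable_euclideanInit {d : ℕ} : Measurable (euclideanInit (d := d)) := by
  unfold euclideanInit
  fun_prop

lemma measurePreserving_last_euclideanInit (d : ℕ) :
    MeasurePreserving fun x : EuclideanSpace ℝ (Fin (d + 1)) =>
      (x (Fin.last d), euclideanInit x) := by
  have hpi := (volume_preserving_piFinSuccAbove (fun _ : Fin (d + 1) => ℝ) (Fin.last d)).comp
    (PiLp.volume_preserving_ofLp (Fin (d + 1)))
  convert ((MeasurePreserving.id volume).prod (PiLp.volume_preserving_toLp (Fin d))).comp hpi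
    using 1
  · ext x i <;>
      simp [euclideanInit, MeasurableEquiv.piFinSuccAbove, Fin.insertNthEquiv, Fin.init]
  · exact Measure.volume_eq_prod ℝ (EuclideanSpace ℝ (Fin d))

lemma last_sq_add_norm_euclideanInit_sq {d : ℕ} (x : EuclideanSpace ℝ (Fin (d + 1))) :
    x (Fin.last d) ^ 2 + ‖euclideanInit x‖ ^ 2 = ‖x‖ ^ 2 := by
  simp [EuclideanSpace.norm_sq_eq, Fin.sum_univ_castSucc, euclideanInit, add_comm]

lemma last_euclideanInit_mem_truncatedCone {d : ℕ} {A : Set (EuclideanSpace ℝ (Fin d))}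
    {x : EuclideanSpace ℝ (Fin (d + 1))} (hx : ‖x‖ = 1) (hA : euclideanInit x ∈ A) {r : ℝ}
    (hr : r ∈ Set.Ioo 0 1) :
    ((r • x) (Fin.last d), euclideanInit (r • x)) ∈ truncatedCone A := by
  have hnorm : √((r • x) (Fin.last d) ^ 2 + ‖euclideanInit (r • x)‖ ^ 2) = r := by
    rw [last_sq_add_norm_euclideanInit_sq, norm_smul, hx, mul_one, Real.norm_of_nonneg hr.1.le,
      Real.sqrt_sq hr.1.le]
  have hinit : r⁻¹ • euclideanInit (r • x) = euclideanInit x := by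
    ext i
    simp [euclideanInit, hr.1.ne']
  simp only [truncatedCone, Set.mem_ofPred_eq, hnorm, hinit]
  exact ⟨hr.2, hA⟩

lemma toSphere_preimage_euclideanInit_le (d : ℕ) {A : Set (EuclideanSpace ℝ (Fin d))}
    (hA : MeasurableSet A) :
    (volume : Measure (EuclideanSpace ℝ (Fin (d + 1)))).toSphere {σ | euclideanInit σ.1 ∈ A} ≤
      (d + 1 : ℕ) * (2 * ∫⁻ y in A, invSqrt (1 - ‖y‖ ^ 2)) := by
  have hpre : MeasurableSet {σ : Metric.sphere (0 : EuclideanSpace ℝ (Fin (d + 1))) 1 |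
      euclideanInit σ.1 ∈ A} := (measurable_euclideanInit.comp measurable_subtype_coe) hA
  rw [Measure.toSphere_apply' _ hpre, finrank_euclideanSpace_fin]
  gcongr
  refine le_trans ?_ (prod_truncatedCone_le volume hA)
  rw [← Measure.volume_eq_prod, ← (measurePreserving_last_euclideanInit d).measure_preimage
    (measurableSet_truncatedCone hA).nullMeasurableSet]
  refine measure_mono ?_
  rintro _ ⟨r, hr, _, ⟨σ, hσ, rfl⟩, rfl⟩
  exact last_euclideanInit_mem_truncatedCone (norm_eq_of_mem_sphere σ) hσ hr

lemma exists_normSphere_preimage_euclideanInit_le (d : ℕ) :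
    ∃ C : ℝ≥0∞, C ≠ ∞ ∧ ∀ A : Set (EuclideanSpace ℝ (Fin d)), MeasurableSet A →
      normSphere (d + 1) (euclideanInit ⁻¹' A) ≤ C * ∫⁻ y in A, invSqrt (1 - ‖y‖ ^ 2) := by
  set S : Measure (EuclideanSpace ℝ (Fin (d + 1))) :=
    Measure.map Subtype.val (volume : Measure (EuclideanSpace ℝ (Fin (d + 1)))).toSphere
  have hS : S Set.univ ≠ 0 := by
    rw [Measure.map_apply measurable_subtype_coe .univ, Set.preimage_univ]
    exact Measure.measure_univ_ne_zero.2 (Measure.toSphere_ne_zero _)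
  refine ⟨(S Set.univ)⁻¹ * ((d + 1 : ℕ) * 2), ENNReal.mul_ne_top (ENNReal.inv_ne_top.2 hS)
    (ENNReal.mul_ne_top (ENNReal.natCast_ne_top _) (by simp)), fun A hA => ?_⟩
  calc normSphere (d + 1) (euclideanInit ⁻¹' A)
      = (S Set.univ)⁻¹ * S (euclideanInit ⁻¹' A) := by
        rw [normSphere, Measure.smul_apply, smul_eq_mul]
    _ ≤ (S Set.univ)⁻¹ * ((d + 1 : ℕ) * (2 * ∫⁻ y in A, invSqrt (1 - ‖y‖ ^ 2))) := by
        rw [Measure.map_apply measurable_subtype_coe (measurable_euclideanInit hA)]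
        gcongr
        exact toSphere_preimage_euclideanInit_le d hA
    _ = (S Set.univ)⁻¹ * ((d + 1 : ℕ) * 2) * ∫⁻ y in A, invSqrt (1 - ‖y‖ ^ 2) := by
        simp only [mul_assoc]

/-- The linear isomorphism `y ↦ (yₘ - y₀, …, yₘ - yₘ₋₁, yₘ)`, which carries the first `m + 1`
coordinates of the sphere variable to the arguments of the indicator functions. -/
def lastSubEquiv (m : ℕ) : EuclideanSpace ℝ (Fin (m + 1)) ≃ₗ[ℝ] (Fin (m + 1) → ℝ) :=
  (WithLp.linearEquiv 2 ℝ (Fin (m + 1) → ℝ)).trans <| LinearEquiv.ofInvolutive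
    { toFun := fun y k => if k = Fin.last m then y k else y (Fin.last m) - y k
      map_add' := fun x y => by ext k; by_cases h : k = Fin.last m <;> simp [h]; ring
      map_smul' := fun c x => by ext k; by_cases h : k = Fin.last m <;> simp [h]; ring }
    (fun y => by ext k; by_cases h : k = Fin.last m <;> simp [h])

lemma lastSubEquiv_last {m : ℕ} (y : EuclideanSpace ℝ (Fin (m + 1))) :
    lastSubEquiv m y (Fin.last m) = y (Fin.last m) :=
  if_pos rfl

lemma lastSubEquiv_castSucc {m : ℕ} (y : EuclideanSpace ℝ (Fin (m + 1))) (j : Fin m) :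
    lastSubEquiv m y j.castSucc = y (Fin.last m) - y j.castSucc :=
  if_neg (Fin.castSucc_lt_last j).ne

@[fun_prop]
lemma measurable_lastSubEquiv (m : ℕ) : Measurable (lastSubEquiv m) :=
  (lastSubEquiv m).toContinuousLinearEquiv.continuous.measurable

section Duality

variable {m n : ℕ}

/-- The pairs `(t, σ)` such that `x = t + σₘ` satisfies `x ∈ Aₘ` and `x - σⱼ ∈ Aⱼ` for `j < m`: they
describe the support of the indicator factors of `χ_{Aₘ} T(χ_{A₀}, …, χ_{Aₘ₋₁}, g, h)` in terms of
the argument `t` of `g`. -/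
def translateBox (A : Fin (m + 1) → Set ℝ) : Set (ℝ × EuclideanSpace ℝ (Fin (m + 2))) :=
  {p | ∀ k, p.1 + lastSubEquiv m (euclideanInit p.2) k ∈ A k}

lemma measurableSet_translateBox {A : Fin (m + 1) → Set ℝ} (hA : ∀ k, MeasurableSet (A k)) :
    MeasurableSet (translateBox A) := by
  simp only [translateBox, Set.ofPred_forall]
  exact .iInter fun k => (show Measurable fun p : ℝ × EuclideanSpace ℝ (Fin (m + 2)) =>
    p.1 + lastSubEquiv m (euclideanInit p.2) k by fun_prop) (hA k)

lemma exists_normSphere_translateBox_slice_le (m : ℕ) :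
    ∃ C : ℝ≥0∞, C ≠ ∞ ∧ ∀ A : Fin (m + 1) → Set ℝ, (∀ k, MeasurableSet (A k)) → ∀ t : ℝ,
      normSphere (m + 2) ((t, ·) ⁻¹' translateBox A) ≤
        C * (∏ k, volume (A k)) ^ (((m : ℝ) + 1) / (m + 2)) := by
  obtain ⟨C₁, hC₁, hsphere⟩ := exists_normSphere_preimage_euclideanInit_le (m + 1)
  obtain ⟨C₂, hC₂, hbox⟩ := exists_setLIntegral_preimage_pi_invSqrt_le volume (lastSubEquiv m)
  refine ⟨C₁ * C₂, ENNReal.mul_ne_top hC₁ hC₂, fun A hA t => ?_⟩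
  set B : Fin (m + 1) → Set ℝ := fun k => (t + ·) ⁻¹' A k
  have hslice : (t, ·) ⁻¹' translateBox A =
      euclideanInit ⁻¹' (lastSubEquiv m ⁻¹' Set.univ.pi B) := by
    ext σ
    simp [translateBox, B]
  have hB : MeasurableSet (lastSubEquiv m ⁻¹' Set.univ.pi B) :=
    measurable_lastSubEquiv m (.univ_pi fun k => measurable_const_add t (hA k))
  calc normSphere (m + 2) ((t, ·) ⁻¹' translateBox A)
      ≤ C₁ * ∫⁻ y in lastSubEquiv m ⁻¹' Set.univ.pi B, invSqrt (1 - ‖y‖ ^ 2) :=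
        hslice ▸ hsphere _ hB
    _ ≤ C₁ * (C₂ * (∏ k, volume (B k)) ^ (((m : ℝ) + 1) / (m + 2))) := by
        gcongr
        have hexp : ((m : ℝ) + 1) / (m + 2) =
            Fintype.card (Fin (m + 1)) / (Fintype.card (Fin (m + 1)) + 1) := by
          rw [Fintype.card_fin, Nat.cast_add_one, add_assoc, one_add_one_eq_two]
        rw [hexp]
        exact hbox B
    _ = C₁ * C₂ * (∏ k, volume (A k)) ^ (((m : ℝ) + 1) / (m + 2)) := by
        simp only [B, measure_preimage_add, mul_assoc]

/-- The spherical average of `ℝ≥0∞`-valued functions. -/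
noncomputable def lsphAvg (n : ℕ) (f : Fin n → ℝ → ℝ≥0∞) (x : ℝ) : ℝ≥0∞ :=
  ∫⁻ σ, ∏ j, f j (x - σ j) ∂normSphere n

/-- The input `(χ_{I₁}, …, χ_{I_{n-2}}, g, h)` of the spherical average. -/
noncomputable def indicatorInput (I : Fin (n - 2) → Set ℝ) (g h : ℝ → ℝ≥0∞) (j : Fin n) :
    ℝ → ℝ≥0∞ :=
  if hj : (j : ℕ) < n - 2 then (I ⟨j, hj⟩).indicator 1 else if (j : ℕ) = n - 2 then g else h

instance (n : ℕ) : SFinite (normSphere n) := by unfold normSphere; infer_instance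

lemma measurable_prod_comp_sub {f : Fin n → ℝ → ℝ≥0∞} (hf : ∀ j, Measurable (f j)) :
    Measurable fun p : ℝ × EuclideanSpace ℝ (Fin n) => ∏ j, f j (p.1 - p.2 j) :=
  Finset.measurable_fun_prod _ fun j _ => (hf j).comp (by fun_prop)

lemma measurable_lsphAvg {f : Fin n → ℝ → ℝ≥0∞} (hf : ∀ j, Measurable (f j)) :
    Measurable (lsphAvg n f) :=
  (measurable_prod_comp_sub hf).lintegral_prod_right'

lemma measurable_indicatorInput {I : Fin (n - 2) → Set ℝ} {g h : ℝ → ℝ≥0∞}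
    (hI : ∀ j, MeasurableSet (I j)) (hg : Measurable g) (hh : Measurable h) (j : Fin n) :
    Measurable (indicatorInput I g h j) := by
  unfold indicatorInput
  split_ifs
  exacts [measurable_one.indicator (hI _), hg, hh]

lemma mem_translateBox_snoc_iff {I : Fin m → Set ℝ} {A : Set ℝ} {x : ℝ}
    {σ : EuclideanSpace ℝ (Fin (m + 2))} :
    (x - σ (Fin.last m).castSucc, σ) ∈ translateBox (Fin.snoc I A : Fin (m + 1) → Set ℝ) ↔
      x ∈ A ∧ ∀ j : Fin m, x - σ j.castSucc.castSucc ∈ I j := by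
  simp [translateBox, Fin.forall_fin_succ', lastSubEquiv_last, lastSubEquiv_castSucc,
    euclideanInit, and_comm]

lemma prod_indicatorInput {I : Fin m → Set ℝ} {g h : ℝ → ℝ≥0∞} (u : Fin (m + 2) → ℝ) :
    ∏ j, indicatorInput (n := m + 2) I g h j (u j) =
      (∏ j : Fin m, (I j).indicator 1 (u j.castSucc.castSucc)) * g (u (Fin.last m).castSucc) *
        h (u (Fin.last (m + 1))) := by
  rw [Fin.prod_univ_castSucc, Fin.prod_univ_castSucc]
  simp [indicatorInput]

lemma indicator_prod_indicatorInput {I : Fin m → Set ℝ} {g h : ℝ → ℝ≥0∞} {A : Set ℝ} (x : ℝ)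
    (σ : EuclideanSpace ℝ (Fin (m + 2))) :
    A.indicator (fun x => ∏ j, indicatorInput (n := m + 2) I g h j (x - σ j)) x =
      g (x - σ (Fin.last m).castSucc) * (translateBox (Fin.snoc I A)).indicator 1
        (x - σ (Fin.last m).castSucc, σ) * h (x - σ (Fin.last (m + 1))) := by
  classical
  simp only [prod_indicatorInput, Set.indicator_apply, mem_translateBox_snoc_iff, Pi.one_apply,
    Finset.prod_boole, Finset.mem_univ, true_imp_iff, ite_and]
  split_ifs <;> simp

lemma setLIntegral_prod_indicatorInput_le {I : Fin m → Set ℝ} {g h : ℝ → ℝ≥0∞}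
    {A : Set ℝ} (hI : ∀ j, MeasurableSet (I j)) (hg : Measurable g) (hA : MeasurableSet A)
    (σ : EuclideanSpace ℝ (Fin (m + 2))) :
    ∫⁻ x in A, ∏ j, indicatorInput (n := m + 2) I g h j (x - σ j) ≤
      (∫⁻ t, g t * (translateBox (Fin.snoc I A)).indicator 1 (t, σ)) * essSup h volume := by
  set B : Set (ℝ × EuclideanSpace ℝ (Fin (m + 2))) := translateBox (Fin.snoc I A)
  have hB : MeasurableSet B := measurableSet_translateBox fun k => by
    induction k using Fin.lastCases <;> simp [hI, hA]
  have hh : ∀ᵐ x : ℝ, h (x - σ (Fin.last (m + 1))) ≤ essSup h volume :=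
    (measurePreserving_sub_right volume _).quasiMeasurePreserving.ae (ENNReal.ae_le_essSup h)
  calc ∫⁻ x in A, ∏ j, indicatorInput (n := m + 2) I g h j (x - σ j)
      = ∫⁻ x, g (x - σ (Fin.last m).castSucc) *
          B.indicator 1 (x - σ (Fin.last m).castSucc, σ) * h (x - σ (Fin.last (m + 1))) := by
        rw [← lintegral_indicator hA]
        exact lintegral_congr fun x => indicator_prod_indicatorInput x σ
    _ ≤ ∫⁻ x, g (x - σ (Fin.last m).castSucc) *
          B.indicator 1 (x - σ (Fin.last m).castSucc, σ) * essSup h volume := by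
        refine lintegral_mono_ae ?_
        filter_upwards [hh] with x hx
        gcongr
    _ = ∫⁻ t, g t * B.indicator 1 (t, σ) * essSup h volume :=
        lintegral_sub_right_eq_self (fun t => g t * B.indicator 1 (t, σ) * essSup h volume) _
    _ = (∫⁻ t, g t * B.indicator 1 (t, σ)) * essSup h volume :=
        lintegral_mul_const _ (hg.mul ((measurable_one.indicator hB).comp measurable_prodMk_right))

lemma lintegral_mul_indicator_slice_le {α β : Type*} [MeasurableSpace α] [MeasurableSpace β]
    {μ : Measure α} {ν : Measure β} [SFinite μ] [SFinite ν] {g : α → ℝ≥0∞} (hg : Measurable g)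
    {B : Set (α × β)} (hB : MeasurableSet B) {K : ℝ≥0∞} (hK : ∀ t, ν ((t, ·) ⁻¹' B) ≤ K) :
    ∫⁻ s, ∫⁻ t, g t * B.indicator 1 (t, s) ∂μ ∂ν ≤ K * ∫⁻ t, g t ∂μ := by
  have hmeas : Measurable fun p : α × β => g p.1 * B.indicator 1 p :=
    (hg.comp measurable_fst).mul (measurable_one.indicator hB)
  calc ∫⁻ s, ∫⁻ t, g t * B.indicator 1 (t, s) ∂μ ∂ν
      = ∫⁻ t, g t * ν ((t, ·) ⁻¹' B) ∂μ := by
        rw [← lintegral_lintegral_swap hmeas.aemeasurable]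
        refine lintegral_congr fun t => ?_
        rw [← lintegral_indicator_one (measurable_prodMk_left hB)]
        exact lintegral_const_mul _ ((measurable_one.indicator hB).comp measurable_prodMk_left)
    _ ≤ ∫⁻ t, K * g t ∂μ := by
        refine lintegral_mono fun t => ?_
        rw [mul_comm]
        gcongr
        exact hK t
    _ = K * ∫⁻ t, g t ∂μ := lintegral_const_mul _ hg

lemma exists_setLIntegral_lsphAvg_indicatorInput_le (m : ℕ) :
    ∃ C : ℝ≥0∞, C ≠ ∞ ∧ ∀ I : Fin m → Set ℝ, (∀ j, MeasurableSet (I j)) →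
      ∀ g h : ℝ → ℝ≥0∞, Measurable g → Measurable h → ∀ A : Set ℝ, MeasurableSet A →
      ∫⁻ x in A, lsphAvg (m + 2) (indicatorInput I g h) x ≤
        C * ((∏ j, volume (I j)) * volume A) ^ (((m : ℝ) + 1) / (m + 2)) *
          (∫⁻ x, g x) * essSup h volume := by
  obtain ⟨C, hC, hslice⟩ := exists_normSphere_translateBox_slice_le m
  refine ⟨C, hC, fun I hI g h hg hh A hA => ?_⟩
  set J : Fin (m + 1) → Set ℝ := Fin.snoc I A
  have hJ : ∀ k, MeasurableSet (J k) := fun k => by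
    induction k using Fin.lastCases <;> simp [J, hI, hA]
  have hprod : ∏ k, volume (J k) = (∏ j, volume (I j)) * volume A := by
    simp [J, Fin.prod_univ_castSucc]
  calc ∫⁻ x in A, lsphAvg (m + 2) (indicatorInput I g h) x
      = ∫⁻ σ, (∫⁻ x in A, ∏ j, indicatorInput (n := m + 2) I g h j (x - σ j))
          ∂normSphere (m + 2) :=
        lintegral_lintegral_swap (measurable_prod_comp_sub
          (measurable_indicatorInput (n := m + 2) hI hg hh)).aemeasurable
    _ ≤ ∫⁻ σ, (∫⁻ t, g t * (translateBox J).indicator 1 (t, σ)) * essSup h volume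
          ∂normSphere (m + 2) :=
        lintegral_mono (setLIntegral_prod_indicatorInput_le hI hg hA)
    _ = (∫⁻ σ, (∫⁻ t, g t * (translateBox J).indicator 1 (t, σ)) ∂normSphere (m + 2)) *
          essSup h volume := by
        refine lintegral_mul_const _ ?_
        exact ((hg.comp measurable_fst).mul
          (measurable_one.indicator (measurableSet_translateBox hJ))).lintegral_prod_left'
    _ ≤ C * ((∏ j, volume (I j)) * volume A) ^ (((m : ℝ) + 1) / (m + 2)) *
          (∫⁻ x, g x) * essSup h volume := by
        gcongr
        rw [← hprod]
        exact lintegral_mul_indicator_slice_le hg (measurableSet_translateBox hJ) (hslice J hJ)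

end Duality

section WeakType

variable {α : Type*} [MeasurableSpace α] {μ : Measure α} {F : α → ℝ≥0∞} {θ : ℝ} {B l : ℝ≥0∞}

lemma mul_measure_rpow_le_of_forall_le {A : Set α} (hA : MeasurableSet A) (hA' : μ A ≠ ∞)
    (hF : ∀ x ∈ A, l ≤ F x) (hθ : 0 ≤ θ) (hθ' : θ < 1) (hB : ∫⁻ x in A, F x ∂μ ≤ B * μ A ^ θ) :
    l * μ A ^ (1 - θ) ≤ B := by
  rcases eq_or_ne (μ A) 0 with h0 | h0
  · simp [h0, ENNReal.zero_rpow_of_pos (sub_pos.2 hθ')]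
  refine (ENNReal.mul_le_mul_iff_left (ENNReal.rpow_pos (pos_iff_ne_zero.2 h0) hA').ne'
    (ENNReal.rpow_ne_top_of_nonneg hθ hA')).1 ?_
  calc l * μ A ^ (1 - θ) * μ A ^ θ = ∫⁻ _ in A, l ∂μ := by
        rw [mul_assoc, ← ENNReal.rpow_add _ _ h0 hA', sub_add_cancel, ENNReal.rpow_one,
          setLIntegral_const]
    _ ≤ ∫⁻ x in A, F x ∂μ := setLIntegral_mono' hA hF
    _ ≤ B * μ A ^ θ := hB

lemma mul_measure_lt_rpow_le_of_setLIntegral_le [SigmaFinite μ] (hF : Measurable F) (hθ : 0 ≤ θ)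
    (hθ' : θ < 1) (hB : ∀ A, MeasurableSet A → ∫⁻ x in A, F x ∂μ ≤ B * μ A ^ θ) :
    l * μ {x | l < F x} ^ (1 - θ) ≤ B := by
  set S : ℕ → Set α := fun N => {x | l < F x} ∩ spanningSets μ N
  have hS (N : ℕ) : MeasurableSet (S N) :=
    (measurableSet_lt measurable_const hF).inter (measurableSet_spanningSets μ N)
  have hS' (N : ℕ) : μ (S N) ≠ ∞ :=
    measure_ne_top_of_subset Set.inter_subset_right (measure_spanningSets_lt_top μ N).ne
  have hmono : Monotone S := fun M N hMN =>
    Set.inter_subset_inter_right _ (monotone_spanningSets μ hMN)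
  have hunion : ⋃ N, S N = {x | l < F x} := by
    rw [← Set.inter_iUnion, iUnion_spanningSets, Set.inter_univ]
  have hrpow : (⨆ N, μ (S N)) ^ (1 - θ) = ⨆ N, μ (S N) ^ (1 - θ) :=
    (ENNReal.orderIsoRpow _ (sub_pos.2 hθ')).map_iSup _
  rw [← hunion, hmono.measure_iUnion, hrpow, ENNReal.mul_iSup]
  exact iSup_le fun N => mul_measure_rpow_le_of_forall_le (hS N) (hS' N)
    (fun x hx => hx.1.le) hθ hθ' (hB _ (hS N))

end WeakType

theorem restricted_weak_type_at_K_general (n : ℕ) (hn : 2 ≤ n) :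
    ∃ C : ℝ, 0 < C ∧ ∀ I : Fin (n - 2) → Set ℝ, (∀ j, MeasurableSet (I j)) →
      ∀ g h : ℝ → ℝ≥0∞, Measurable g → Measurable h → ∀ l : ℝ≥0∞,
      l * volume {x : ℝ | l < lsphAvg n (indicatorInput I g h) x} ^ ((1 : ℝ) / n) ≤
        ENNReal.ofReal C * (∏ j, volume (I j) ^ (((n : ℝ) - 1) / n)) * lpNorm 1 g *
          lpNorm ∞ h := by
  obtain ⟨m, rfl⟩ : ∃ m, n = m + 2 := ⟨n - 2, by omega⟩
  obtain ⟨C, hC, hbound⟩ := exists_setLIntegral_lsphAvg_indicatorInput_le m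
  refine ⟨C.toReal + 1, by positivity, fun I hI g h hg hh l => ?_⟩
  set θ : ℝ := ((m : ℝ) + 1) / (m + 2) with hθ_def
  have hθ : 0 ≤ θ := by positivity
  have hθ' : θ < 1 := (div_lt_one (by positivity)).2 (by linarith)
  have hexp : (1 : ℝ) / (m + 2 : ℕ) = 1 - θ := by
    rw [hθ_def]; push_cast; field_simp; ring
  have hexp' : (((m + 2 : ℕ) : ℝ) - 1) / (m + 2 : ℕ) = θ := by
    rw [hθ_def]; push_cast; congr 1; ring
  have hC' : C ≤ ENNReal.ofReal (C.toReal + 1) :=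
    (ENNReal.le_ofReal_iff_toReal_le hC (by positivity)).2 (by linarith)
  simp only [hexp, hexp', _root_.lpNorm, ENNReal.one_ne_top, if_true, if_false,
    ENNReal.toReal_one, ENNReal.rpow_one, div_one]
  rw [ENNReal.prod_rpow_of_nonneg hθ]
  refine mul_measure_lt_rpow_le_of_setLIntegral_le
    (measurable_lsphAvg (measurable_indicatorInput hI hg hh)) hθ hθ' fun A hA => ?_
  calc ∫⁻ x in A, lsphAvg (m + 2) (indicatorInput I g h) x
      ≤ C * ((∏ j, volume (I j)) * volume A) ^ θ * (∫⁻ x, g x) * essSup h volume :=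
        hbound I hI g h hg hh A hA
    _ = C * (∏ j, volume (I j)) ^ θ * (∫⁻ x, g x) * essSup h volume * volume A ^ θ := by
        rw [ENNReal.mul_rpow_of_nonneg _ _ hθ]
        ring
    _ ≤ ENNReal.ofReal (C.toReal + 1) * (∏ j, volume (I j)) ^ θ * (∫⁻ x, g x) *
          essSup h volume * volume A ^ θ := by gcongr

lemma sphAvg_eq_lsphAvg_indicatorInput {n : ℕ} (I : Fin (n - 2) → Set ℝ) (g h : ℝ → ℝ) (x : ℝ) :
    sphAvg n (fun j => if hj : (j : ℕ) < n - 2 then (I ⟨j, hj⟩).indicator fun _ => (1 : ℝ)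
        else if (j : ℕ) = n - 2 then g else h) x =
      lsphAvg n (indicatorInput I (fun y => ENNReal.ofReal (g y)) fun y => ENNReal.ofReal (h y))
        x := by
  refine lintegral_congr fun σ => Finset.prod_congr rfl fun j _ => ?_
  simp only [indicatorInput]
  split_ifs with hj
  · by_cases hx : x - σ j ∈ I ⟨j, hj⟩ <;> simp [hx]
  · rfl
  · rfl

theorem restricted_weak_type_at_K (n : ℕ) (hn : 3 ≤ n) :
    ∃ C : ℝ, 0 < C ∧ ∀ I : Fin (n - 2) → Set ℝ,
      (∀ j, MeasurableSet (I j)) → (∀ j, volume (I j) < ∞) →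
      ∀ g h : ℝ → ℝ, Measurable g → (∀ x, 0 ≤ g x) →
        Measurable h → (∀ x, 0 ≤ h x) →
      ∀ l : ℝ, 0 < l →
      ENNReal.ofReal l *
          volume {x : ℝ | ENNReal.ofReal l < sphAvg n (fun j =>
            if hj : (j : ℕ) < n - 2 then (I ⟨j, hj⟩).indicator fun _ => (1 : ℝ)
            else if (j : ℕ) = n - 2 then g else h) x} ^ ((1 : ℝ) / n) ≤
        ENNReal.ofReal C * (∏ j, volume (I j) ^ (((n : ℝ) - 1) / n)) *
          lpNorm 1 (fun x => ENNReal.ofReal (g x)) *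
          lpNorm ∞ (fun x => ENNReal.ofReal (h x)) := by
  obtain ⟨C, hC, hbound⟩ := restricted_weak_type_at_K_general n (by omega)
  refine ⟨C, hC, fun I hI _ g h hg _ hh _ l _ => ?_⟩
  simpa only [sphAvg_eq_lsphAvg_indicatorInput] using
    hbound I hI _ _ hg.ennreal_ofReal hh.ennreal_ofReal (ENNReal.ofReal l)
end
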